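/- For the algebra of quantum matrices R_q[M_{m×n}] over a field K with q ∈ K^× not a root of unity, viewed as a quantum nilpotent algebra of dimension mn via x_{(i−1)n+j} = t_{ij}, the canonical sequence of homogeneous prime elements from the prime element theorem consists of solid quantum minors: y_{(i−1)n+j} = Δ_{[i−min(i,j)+1, i], [j−min(i,j)+1, j]} for all 1 ≤ i ≤ m, 1 ≤ j ≤ n; the function η : [1,mn] → ℤ can be chosen as η((i−1)n+j) = j − i; and consequently the rank of R_q[M_{m×n}] (the cardinality of the range of η) equals m + n − 1. -/

import Mathlib

open scoped BigOperators

noncomputable section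

universe u v

/-- The group of `K`-points of a split torus of rank `r`. -/
abbrev Torus (K : Type u) [Field K] (r : ℕ) : Type u := Fin r → Kˣ

section Core

variable (K : Type u) [Field K] {R : Type v} [Ring R] [Algebra K R] {r N : ℕ}

/-- `a` is an eigenvector of the torus action `act` with (integral) character `f`. -/
def IsEigenWith (act : Torus K r →* (R ≃ₐ[K] R)) (f : Fin r → ℤ) (a : R) : Prop :=
  ∀ ξ : Torus K r, act ξ a = ((∏ i, ξ i ^ f i : Kˣ) : K) • a

/-- The torus action `act` is rational: every element is a finite sum of
eigenvectors whose eigenvalues are given by integral characters of the torus. -/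
def IsRationalAction (act : Torus K r →* (R ≃ₐ[K] R)) : Prop :=
  ∀ a : R, ∃ (s : Finset (Fin r → ℤ)) (c : (Fin r → ℤ) → R),
    a = ∑ f ∈ s, c f ∧ ∀ f ∈ s, IsEigenWith K act f (c f)

/-- The ordered monomial `x 0 ^ m 0 * x 1 ^ m 1 * ⋯ * x (N-1) ^ m (N-1)`. -/
def ordMonomial (x : Fin N → R) (m : Fin N → ℕ) : R :=
  ((List.finRange N).map fun k => x k ^ m k).prod

/-- The ordered monomial in the reversed order of the generators. -/
def revOrdMonomial (x : Fin N → R) (m : Fin N → ℕ) : R :=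
  ((List.finRange N).reverse.map fun k => x k ^ m k).prod

/-- The subalgebra generated by the first `m` of the elements `x 0, …, x (N-1)`. -/
def Rsub (x : Fin N → R) (m : ℕ) : Subalgebra K R :=
  Algebra.adjoin K (x '' {l : Fin N | (l : ℕ) < m})

/-- The subalgebra generated by the elements `x l` with `m < l` (for the reversed order). -/
def RsubRev (x : Fin N → R) (m : ℕ) : Subalgebra K R :=
  Algebra.adjoin K (x '' {l : Fin N | m < (l : ℕ)})

/-- The skew derivation `δ_k : a ↦ x_k a − (h_k · a) x_k` attached to the `k`-th generator. -/
def skewDelta (act : Torus K r →* (R ≃ₐ[K] R)) (x : Fin N → R) (h : Fin N → Torus K r)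
    (k : Fin N) : R → R :=
  fun a => x k * a - act (h k) a * x k

end Core

/-- A quantum nilpotent algebra (CGL extension) of dimension `N`:  an iterated skew
polynomial extension `R = K[x_1][x_2; σ_2, δ_2]⋯[x_N; σ_N, δ_N]` equipped with a rational
action of a torus `H = (Kˣ)^r` by `K`-algebra automorphisms such that the `x_k` are
`H`-eigenvectors, each `δ_k` is a locally nilpotent `σ_k`-derivation of the subalgebra
generated by `x_1, …, x_{k-1}`, and each `σ_k` is given by the action of a torus element
`h_k` whose eigenvalue `λ_k` on `x_k` is not a root of unity.  The iterated skew polynomial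
presentation is encoded by the generation, linear independence of ordered monomials
(PBW basis) and the skew commutation conditions. -/
structure QNA (K : Type u) [Field K] (R : Type v) [Ring R] [Algebra K R] (N r : ℕ) where
  x : Fin N → R
  act : Torus K r →* (R ≃ₐ[K] R)
  h : Fin N → Torus K r
  lam : Fin N → K
  rational : IsRationalAction K act
  gen : Algebra.adjoin K (Set.range x) = ⊤
  pbw : LinearIndependent K (ordMonomial (R := R) x)
  eigenvec : ∀ k : Fin N, ∃ f : Fin r → ℤ, IsEigenWith K act f (x k)
  stable : ∀ k : Fin N, ∀ a ∈ Rsub K x (k : ℕ), skewDelta K act x h k a ∈ Rsub K x (k : ℕ)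
  locnil : ∀ k : Fin N, ∀ a ∈ Rsub K x (k : ℕ), ∃ n : ℕ, (skewDelta K act x h k)^[n] a = 0
  hx : ∀ k, act (h k) (x k) = lam k • x k
  lam_not_root : ∀ k, ∀ n : ℕ, n ≠ 0 → lam k ^ n ≠ 1

/-- A symmetric quantum nilpotent algebra: a quantum nilpotent algebra which admits an
iterated skew polynomial presentation, satisfying the same axioms, also for the reversed
order `x_N, x_{N-1}, …, x_1` of the generators, with respect to torus elements `h*_k`. -/
structure SymQNA (K : Type u) [Field K] (R : Type v) [Ring R] [Algebra K R] (N r : ℕ)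
    extends QNA K R N r where
  hstar : Fin N → Torus K r
  lamstar : Fin N → K
  pbwRev : LinearIndependent K (revOrdMonomial (R := R) x)
  stableRev : ∀ k : Fin N, ∀ a ∈ RsubRev K x (k : ℕ),
    skewDelta K act x hstar k a ∈ RsubRev K x (k : ℕ)
  locnilRev : ∀ k : Fin N, ∀ a ∈ RsubRev K x (k : ℕ),
    ∃ n : ℕ, (skewDelta K act x hstar k)^[n] a = 0
  hxstar : ∀ k, act (hstar k) (x k) = lamstar k • x k
  lamstar_not_root : ∀ k, ∀ n : ℕ, n ≠ 0 → lamstar k ^ n ≠ 1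

section Prime

variable (K : Type u) [Field K] {R : Type v} [Ring R] [Algebra K R] {r N : ℕ}

/-- The skew derivation `δ_k` of the `k`-th step of the presentation vanishes. -/
def deltaZero (Q : QNA K R N r) (k : Fin N) : Prop :=
  ∀ a ∈ Rsub K Q.x (k : ℕ), skewDelta K Q.act Q.x Q.h k a = 0

/-- `p` is a prime element of the subalgebra `A`:  `p` is a nonzero noninvertible normal
element of `A` (`pA = Ap`) such that `A/Ap` is a domain. -/
def IsPrimeIn (A : Subalgebra K R) (p : R) : Prop :=
  p ∈ A ∧ p ≠ 0 ∧ (¬ ∃ u ∈ A, p * u = 1 ∧ u * p = 1) ∧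
  (∀ a ∈ A, ∃ b ∈ A, a * p = p * b) ∧
  (∀ a ∈ A, ∃ b ∈ A, p * a = b * p) ∧
  (∀ a ∈ A, ∀ b ∈ A, (∃ d ∈ A, a * b = p * d) → (∃ d ∈ A, a = p * d) ∨ (∃ d ∈ A, b = p * d))

/-- The predecessor function of the level sets of `η`:  `p(k)` is the largest `l < k`
with `η l = η k`, and `⊥` (i.e. `−∞`) if there is no such `l`. -/
def predIdx {α : Type*} [DecidableEq α] (η : Fin N → α) (k : Fin N) : WithBot (Fin N) :=
  (Finset.univ.filter fun l => l < k ∧ η l = η k).max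

/-- The successor function of the level sets of `η`:  `s(k)` is the smallest `l > k`
with `η l = η k`, and `⊤` (i.e. `+∞`) if there is no such `l`. -/
def succIdx {α : Type*} [DecidableEq α] (η : Fin N → α) (k : Fin N) : WithTop (Fin N) :=
  (Finset.univ.filter fun l => k < l ∧ η l = η k).min

/-- `(η, c, y)` is a sequence of homogeneous prime elements for the quantum nilpotent
algebra `Q` in the sense of the prime element theorem:  `y` is defined by the recursion
`y_k = y_{p(k)} x_k − c_k` (if `δ_k ≠ 0`; `y_k = x_k` if `δ_k = 0`), the `y_k` are
`H`-eigenvectors, and for every `k` the homogeneous prime elements of the subalgebra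
`R_k` generated by `x_1, …, x_k` are precisely the nonzero scalar multiples of the
`y_l` with `l ≤ k` and `s(l) > k`. -/
structure IsPrimeSeq (Q : QNA K R N r) (η : Fin N → ℤ) (c : Fin N → R) (y : Fin N → R) :
    Prop where
  c_mem : ∀ k : Fin N, ¬ deltaZero K Q k → c k ∈ Rsub K Q.x (k : ℕ)
  rec_delta_zero : ∀ k : Fin N, deltaZero K Q k → y k = Q.x k
  rec_delta_ne : ∀ k : Fin N, ¬ deltaZero K Q k →
    y k = (WithBot.recBotCoe (1 : R) (fun l => y l) (predIdx η k)) * Q.x k - c k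
  homog : ∀ k : Fin N, ∃ f : Fin r → ℤ, IsEigenWith K Q.act f (y k)
  prime_iff : ∀ k : Fin N, ∀ u : R,
    (IsPrimeIn K (Rsub K Q.x ((k : ℕ) + 1)) u ∧ ∃ f : Fin r → ℤ, IsEigenWith K Q.act f u) ↔
    (∃ l : Fin N, l ≤ k ∧ (∀ l' : Fin N, l < l' → l' ≤ k → η l' ≠ η l) ∧
      ∃ t : Kˣ, u = (t : K) • y l)

/-- The vector `ē_k = e_k + e_{p(k)} + e_{p²(k)} + ⋯ ∈ ℤ^N`. -/
def ebar (η : Fin N → ℤ) (k : Fin N) : Fin N → ℤ :=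
  fun l => if l ≤ k ∧ η l = η k then 1 else 0

/-- The multiplicatively skewsymmetric matrix of eigenvalues:  `1` on the diagonal,
`λ_{kl}` below it and `λ_{lk}⁻¹` above it. -/
def omegaEntry (lam2 : Fin N → Fin N → Kˣ) (k l : Fin N) : Kˣ :=
  if k = l then 1 else if l < k then lam2 k l else (lam2 l k)⁻¹

/-- The unique group bicharacter `Ω : ℤ^N × ℤ^N → Kˣ` with `Ω(e_k, e_l)` equal to `1`,
`λ_{kl}`, `λ_{lk}⁻¹` according as `k = l`, `k > l`, `k < l`. -/
def Omega (lam2 : Fin N → Fin N → Kˣ) (f g : Fin N → ℤ) : Kˣ :=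
  ∏ k, ∏ l, (omegaEntry K lam2 k l) ^ (f k * g l)

/-- The set of exchangeable indices: those `k` with `s(k) ≠ +∞`. -/
def exSet (η : Fin N → ℤ) : Finset (Fin N) :=
  Finset.univ.filter fun k => ∃ l, k < l ∧ η l = η k

/-- Condition (A): `K` contains square roots of the scalars `λ_{kl}` such that the
subgroup of `Kˣ` generated by all of them contains no elements of order 2. -/
def CondA (lam2 : Fin N → Fin N → Kˣ) : Prop :=
  ∃ sq : Fin N → Fin N → Kˣ, (∀ k l : Fin N, l < k → sq k l ^ 2 = lam2 k l) ∧
    ∀ g ∈ Subgroup.closure {u : Kˣ | ∃ k l : Fin N, l < k ∧ u = sq k l}, g ^ 2 = 1 → g = 1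

/-- Condition (B): there exist positive integers `d_n`, `n ∈ range η`, such that
`(λ*_k)^{d_{η(l)}} = (λ*_l)^{d_{η(k)}}` for all exchangeable `k, l`. -/
def CondB (η : Fin N → ℤ) (lamstar : Fin N → K) : Prop :=
  ∃ d : ℤ → ℕ, (∀ n ∈ Set.range η, 0 < d n) ∧
    ∀ k ∈ exSet η, ∀ l ∈ exSet η, lamstar k ^ d (η l) = lamstar l ^ d (η k)

/-- The defining conditions for the exchange matrix `B̃ ∈ M_{N×ex}(ℤ)`:  columns indexed
outside `ex` vanish; `Ω(Σ_l b_{lk} ē_l, ē_n)` equals `λ*_n` for `k = n` and `1` otherwise;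
and the products `y_1^{b_{1k}} ⋯ y_N^{b_{Nk}}` are fixed under `H`, i.e. the characters
`χ_{y_l}` of the `y_l` satisfy `Σ_l b_{lk} χ_{y_l} = 0`. -/
def IsExchangeMatrix (lam2 : Fin N → Fin N → Kˣ) (η : Fin N → ℤ) (lamstar : Fin N → K)
    (chiy : Fin N → Fin r → ℤ) (B : Fin N → Fin N → ℤ) : Prop :=
  (∀ k : Fin N, k ∉ exSet η → ∀ l, B l k = 0) ∧
  (∀ k ∈ exSet η, ∀ n : Fin N,
    ((Omega K lam2 (fun j => ∑ l, B l k * ebar η l j) (ebar η n) : Kˣ) : K) =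
      (if k = n then lamstar n else 1)) ∧
  (∀ k ∈ exSet η, ∀ i : Fin r, (∑ l, B l k * chiy l i) = 0)

/-- `ι : R →ₐ[K] D` realizes the division ring `D` as the division ring of fractions
`Fract R`:  `ι` is injective and every element of `D` is a right fraction `ι(a) ι(b)⁻¹`. -/
def IsFractionEmb {D : Type v} [DivisionRing D] [Algebra K D] (ι : R →ₐ[K] D) : Prop :=
  Function.Injective ι ∧ ∀ d : D, ∃ a b : R, b ≠ 0 ∧ d * ι b = ι a

end Prime
section QMat

variable (K : Type u) [Field K] (q : Kˣ) (m n : ℕ)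

/-- The defining relations of the algebra of quantum matrices `R_q[M_{m×n}]`. -/
inductive qMatRel : FreeAlgebra K (Fin m × Fin n) → FreeAlgebra K (Fin m × Fin n) → Prop
  | col : ∀ (i k : Fin m) (j : Fin n), i < k →
      qMatRel (FreeAlgebra.ι K (i, j) * FreeAlgebra.ι K (k, j))
        ((q : K) • (FreeAlgebra.ι K (k, j) * FreeAlgebra.ι K (i, j)))
  | row : ∀ (i : Fin m) (j l : Fin n), j < l →
      qMatRel (FreeAlgebra.ι K (i, j) * FreeAlgebra.ι K (i, l))
        ((q : K) • (FreeAlgebra.ι K (i, l) * FreeAlgebra.ι K (i, j)))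
  | comm : ∀ (i k : Fin m) (j l : Fin n), i < k → l < j →
      qMatRel (FreeAlgebra.ι K (i, j) * FreeAlgebra.ι K (k, l))
        (FreeAlgebra.ι K (k, l) * FreeAlgebra.ι K (i, j))
  | serp : ∀ (i k : Fin m) (j l : Fin n), i < k → j < l →
      qMatRel (FreeAlgebra.ι K (i, j) * FreeAlgebra.ι K (k, l))
        (FreeAlgebra.ι K (k, l) * FreeAlgebra.ι K (i, j) +
          ((q : K) - (q : K)⁻¹) • (FreeAlgebra.ι K (i, l) * FreeAlgebra.ι K (k, j)))

/-- The algebra of quantum matrices `R_q[M_{m×n}]`, presented by the generators `t_{ij}`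
and the standard quantum matrix relations. -/
def RqMat : Type u := RingQuot (qMatRel K q m n)

instance : Ring (RqMat K q m n) := inferInstanceAs (Ring (RingQuot (qMatRel K q m n)))

instance : Algebra K (RqMat K q m n) :=
  inferInstanceAs (Algebra K (RingQuot (qMatRel K q m n)))

/-- The generator `t_{ij}` of `R_q[M_{m×n}]`. -/
def tGen (i : Fin m) (j : Fin n) : RqMat K q m n :=
  RingQuot.mkAlgHom K (qMatRel K q m n) (FreeAlgebra.ι K (i, j))

/-- The torus element `h_{ij} = (1,…,1,q⁻¹,1,…,1,q,1,…,1) ∈ (Kˣ)^{m+n}`, with `q⁻¹` in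
position `i` and `q` in position `m+j`. -/
def hMat (i : Fin m) (j : Fin n) : Torus K (m + n) :=
  fun s => if s = Fin.castAdd n i then q⁻¹ else if s = Fin.natAdd m j then q else 1

/-- The number of inversions (the length) of a permutation of `Fin k`. -/
def invCount {k : ℕ} (σ : Equiv.Perm (Fin k)) : ℕ :=
  (Finset.univ.filter fun p : Fin k × Fin k => p.1 < p.2 ∧ σ p.2 < σ p.1).card

/-- The quantum minor `Δ_{I,J} = Σ_{σ ∈ S_k} (−q)^{ℓ(σ)} t_{i_1 j_{σ(1)}} ⋯ t_{i_k j_{σ(k)}}`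
associated to row indices `I` and column indices `J`. -/
def qMinor (k : ℕ) (I : Fin k → Fin m) (J : Fin k → Fin n) : RqMat K q m n :=
  ∑ σ : Equiv.Perm (Fin k), (-(q : K)) ^ invCount σ •
    ((List.finRange k).map fun a => tGen K q m n (I a) (J (σ a))).prod

/-- The solid quantum minor `Δ_{[i−min(i,j)+1, i], [j−min(i,j)+1, j]}` (here `i, j` are
0-based, so the minor has size `min i j + 1` and lower-right corner `(i, j)`). -/
def solidMinor (i : Fin m) (j : Fin n) : RqMat K q m n :=
  qMinor K q m n (min (i : ℕ) (j : ℕ) + 1)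
    (fun a => ⟨(i : ℕ) - min (i : ℕ) (j : ℕ) + (a : ℕ), by
      have := a.isLt; have := i.isLt; omega⟩)
    (fun a => ⟨(j : ℕ) - min (i : ℕ) (j : ℕ) + (a : ℕ), by
      have := a.isLt; have := j.isLt; omega⟩)

end QMat

/-!
By the PBW basis every step `R_{k-1} ⊂ R_k` is a skew polynomial extension `A[x; σ, δ]`, so elements
of `R_k` have well-defined leading coefficients and `R` is a domain. Moreover a homogeneous normal
element `q`-commutes with `t_{ij}`, because the weight of `t_{ij}` determines it up to a scalar.

In the first row and column `δ_k = 0`. A homogeneous prime element of `R_{k-1}` then stays prime in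
`R_k`, so `k` starts a new level set of `η`, and `y_k = t_{ij}`. At all other indices `t_{ij}` does
not `q`-commute with the solid minor `Δ'` at `(i - 1, j - 1)`: a representation on sequences, in
which a `2 × 2` corner acts by a `q`-oscillator, the earlier entries of its diagonal by `1` and all
other generators by `0`, tells `t_{ij} Δ'` from the multiples of `Δ' t_{ij}`.
Hence `Δ'` is no longer prime in `R_k`, which forces `p(i, j) = (i - 1, j - 1)` and
`y_k = Δ' t_{ij} - c_k`. Since `y_k` is an eigenvector which `q`-commutes with `t_{ij}`, comparing
coefficients expresses `c_k` through the commutator of `t_{ij}` and `Δ'`, and the result agrees with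
the identity `Δ = Δ' t_{ij} + q (q - q⁻¹)⁻¹ [t_{ij}, Δ']`, obtained by letting the rows of the
matrix act on a quantum exterior algebra.
-/

section OreExtension

variable {K : Type u} [Field K] {R : Type v} [Ring R] [Algebra K R]

theorem eq_zero_or_eq_zero_of_mem_of_mul_eq_zero {A : Subalgebra K R} [NoZeroDivisors A] {a b : R}
    (ha : a ∈ A) (hb : b ∈ A) (hab : a * b = 0) : a = 0 ∨ b = 0 := by
  have hab' : (⟨a, ha⟩ * ⟨b, hb⟩ : A) = 0 := Subtype.ext hab
  exact (mul_eq_zero.1 hab').imp (congrArg Subtype.val) (congrArg Subtype.val)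

theorem exists_mul_eq_mul_of_mem_adjoin {s : Set R} {p : R}
    (hs : ∀ a ∈ s, ∃ b ∈ Algebra.adjoin K s, a * p = p * b) {a : R}
    (ha : a ∈ Algebra.adjoin K s) : ∃ b ∈ Algebra.adjoin K s, a * p = p * b := by
  induction ha using Algebra.adjoin_induction with
  | mem a ha => exact hs a ha
  | algebraMap r =>
    exact ⟨algebraMap K R r, Subalgebra.algebraMap_mem _ r, Algebra.commutes r p⟩
  | add a a' _ _ iha iha' =>
    obtain ⟨b, hb, e⟩ := iha
    obtain ⟨b', hb', e'⟩ := iha'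
    exact ⟨b + b', add_mem hb hb', by rw [add_mul, mul_add, e, e']⟩
  | mul a a' _ _ iha iha' =>
    obtain ⟨b, hb, e⟩ := iha
    obtain ⟨b', hb', e'⟩ := iha'
    exact ⟨b * b', mul_mem hb hb', by rw [mul_assoc, e', ← mul_assoc, e, mul_assoc]⟩

theorem exists_mul_eq_mul_of_mem_adjoin' {s : Set R} {p : R}
    (hs : ∀ a ∈ s, ∃ b ∈ Algebra.adjoin K s, p * a = b * p) {a : R}
    (ha : a ∈ Algebra.adjoin K s) : ∃ b ∈ Algebra.adjoin K s, p * a = b * p := by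
  induction ha using Algebra.adjoin_induction with
  | mem a ha => exact hs a ha
  | algebraMap r =>
    exact ⟨algebraMap K R r, Subalgebra.algebraMap_mem _ r, (Algebra.commutes r p).symm⟩
  | add a a' _ _ iha iha' =>
    obtain ⟨b, hb, e⟩ := iha
    obtain ⟨b', hb', e'⟩ := iha'
    exact ⟨b + b', add_mem hb hb', by rw [add_mul, mul_add, e, e']⟩
  | mul a a' _ _ iha iha' =>
    obtain ⟨b, hb, e⟩ := iha
    obtain ⟨b', hb', e'⟩ := iha'
    exact ⟨b * b', mul_mem hb hb', by rw [← mul_assoc, e, mul_assoc, e', mul_assoc]⟩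

/-- The left polynomials in `x` of degree less than `n` with coefficients in `A`, that is
`A + A x + ⋯ + A x ^ (n - 1)`. -/
def leftDegreeLT (A : Subalgebra K R) (x : R) : ℕ → Submodule K R
  | 0 => ⊥
  | n + 1 => A.toSubmodule.map (LinearMap.mulRight K (x ^ n)) ⊔ leftDegreeLT A x n

namespace leftDegreeLT

variable {A : Subalgebra K R} {x : R}

@[simp]
theorem zero_eq : leftDegreeLT A x 0 = ⊥ := rfl

theorem mem_succ {n : ℕ} {z : R} :
    z ∈ leftDegreeLT A x (n + 1) ↔ ∃ a ∈ A, ∃ f ∈ leftDegreeLT A x n, z = a * x ^ n + f := by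
  simp [leftDegreeLT, Submodule.mem_sup, eq_comm]

theorem mul_pow_add_mem {a f : R} {n : ℕ} (ha : a ∈ A) (hf : f ∈ leftDegreeLT A x n) :
    a * x ^ n + f ∈ leftDegreeLT A x (n + 1) :=
  mem_succ.2 ⟨a, ha, f, hf, rfl⟩

theorem mul_pow_mem {a : R} (ha : a ∈ A) (n : ℕ) : a * x ^ n ∈ leftDegreeLT A x (n + 1) := by
  simpa using mul_pow_add_mem ha (zero_mem (leftDegreeLT A x n))

theorem mem_one {z : R} : z ∈ leftDegreeLT A x 1 ↔ z ∈ A := by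
  simp [mem_succ]

theorem mono : Monotone (leftDegreeLT A x) :=
  monotone_nat_of_le_succ fun _ => le_sup_right

theorem exists_eq_mul_pow_add {n : ℕ} {z : R} (hz : z ∈ leftDegreeLT A x n) (hz0 : z ≠ 0) :
    ∃ k, ∃ a ∈ A, a ≠ 0 ∧ ∃ f ∈ leftDegreeLT A x k, z = a * x ^ k + f := by
  induction n with
  | zero => exact absurd (by simpa using hz) hz0
  | succ n ih =>
    obtain ⟨a, ha, f, hf, rfl⟩ := mem_succ.1 hz
    rcases eq_or_ne a 0 with rfl | ha0
    · exact ih (by simpa using hf)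
    · exact ⟨n, a, ha, ha0, f, hf, rfl⟩

theorem mul_mem_left {a : R} (ha : a ∈ A) {n : ℕ} {z : R} (hz : z ∈ leftDegreeLT A x n) :
    a * z ∈ leftDegreeLT A x n := by
  induction n generalizing z with
  | zero => simp_all
  | succ n ih =>
    obtain ⟨b, hb, f, hf, rfl⟩ := mem_succ.1 hz
    rw [mul_add, ← mul_assoc]
    exact mul_pow_add_mem (mul_mem ha hb) (ih hf)

theorem mul_gen_mem {n : ℕ} {z : R} (hz : z ∈ leftDegreeLT A x n) :
    z * x ∈ leftDegreeLT A x (n + 1) := by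
  induction n generalizing z with
  | zero => simp_all
  | succ n ih =>
    obtain ⟨b, hb, f, hf, rfl⟩ := mem_succ.1 hz
    rw [add_mul, mul_assoc, ← pow_succ]
    exact mul_pow_add_mem hb (ih hf)

theorem mul_gen_pow_mem {n : ℕ} {z : R} (hz : z ∈ leftDegreeLT A x n) (k : ℕ) :
    z * x ^ k ∈ leftDegreeLT A x (n + k) := by
  induction k with
  | zero => simpa using hz
  | succ k ih => rw [pow_succ, ← mul_assoc, ← add_assoc]; exact mul_gen_mem ih

end leftDegreeLT

open leftDegreeLT

/-- `B` is generated by `A` and an element `x` with `x a - σ(a) x ∈ A` for all `a ∈ A`, where `σ`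
is an automorphism preserving `A`: a quotient of a skew polynomial extension of `A`. -/
structure IsOreStep (A B : Subalgebra K R) (x : R) (σ : R ≃ₐ[K] R) : Prop where
  eq_adjoin : B = Algebra.adjoin K (insert x (A : Set R))
  map_mem : ∀ a ∈ A, σ a ∈ A
  symm_mem : ∀ a ∈ A, σ.symm a ∈ A
  commutator_mem : ∀ a ∈ A, x * a - σ a * x ∈ A

/-- `B` is the skew polynomial extension `A[x; σ, δ]` with `δ(a) = x a - σ(a) x`: an `IsOreStep`
in which the powers of `x` are left linearly independent over `A`. -/
structure IsOreExtension (A B : Subalgebra K R) (x : R) (σ : R ≃ₐ[K] R) : Prop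
    extends IsOreStep A B x σ where
  eq_zero_of_mul_pow_mem : ∀ n, ∀ a ∈ A, a * x ^ n ∈ leftDegreeLT A x n → a = 0

namespace IsOreStep

variable {A B : Subalgebra K R} {x : R} {σ : R ≃ₐ[K] R}

theorem le (h : IsOreStep A B x σ) : A ≤ B := by
  rw [h.eq_adjoin]
  exact fun a ha => Algebra.subset_adjoin (Set.mem_insert_of_mem x ha)

theorem gen_mem (h : IsOreStep A B x σ) : x ∈ B := by
  rw [h.eq_adjoin]
  exact Algebra.subset_adjoin (Set.mem_insert x _)

theorem pow_mem (h : IsOreStep A B x σ) (n : ℕ) {a : R} (ha : a ∈ A) : (σ ^ n) a ∈ A := by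
  induction n with
  | zero => simpa using ha
  | succ n ih => rw [pow_succ']; exact h.map_mem _ ih

theorem pow_symm_mem (h : IsOreStep A B x σ) (n : ℕ) {a : R} (ha : a ∈ A) :
    (σ ^ n).symm a ∈ A := by
  induction n generalizing a with
  | zero => exact ha
  | succ n ih =>
    have hsymm : (σ ^ (n + 1)).symm a = (σ ^ n).symm (σ.symm a) := by
      rw [AlgEquiv.symm_apply_eq, pow_succ', AlgEquiv.mul_apply]
      simp
    rw [hsymm]
    exact ih (h.symm_mem a ha)

theorem gen_mul_mem (h : IsOreStep A B x σ) {n : ℕ} {z : R} (hz : z ∈ leftDegreeLT A x n) :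
    x * z ∈ leftDegreeLT A x (n + 1) := by
  induction n generalizing z with
  | zero => simp_all
  | succ n ih =>
    obtain ⟨b, hb, f, hf, rfl⟩ := mem_succ.1 hz
    have hsplit : x * (b * x ^ n + f) =
        σ b * x ^ (n + 1) + ((x * b - σ b * x) * x ^ n + x * f) := by
      rw [pow_succ']; noncomm_ring
    rw [hsplit]
    exact mul_pow_add_mem (h.map_mem b hb)
      (add_mem (mul_pow_mem (h.commutator_mem b hb) n) (ih hf))

theorem gen_pow_mul_mem (h : IsOreStep A B x σ) (k : ℕ) {n : ℕ} {z : R}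
    (hz : z ∈ leftDegreeLT A x n) : x ^ k * z ∈ leftDegreeLT A x (n + k) := by
  induction k with
  | zero => simpa using hz
  | succ k ih => rw [pow_succ', mul_assoc, ← add_assoc]; exact h.gen_mul_mem ih

theorem gen_pow_mul_sub_mem (h : IsOreStep A B x σ) (n : ℕ) {a : R} (ha : a ∈ A) :
    x ^ n * a - (σ ^ n) a * x ^ n ∈ leftDegreeLT A x n := by
  induction n with
  | zero => simp
  | succ n ih =>
    have hsplit : x ^ (n + 1) * a - (σ ^ (n + 1)) a * x ^ (n + 1) =
        x * (x ^ n * a - (σ ^ n) a * x ^ n) +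
          (x * (σ ^ n) a - σ ((σ ^ n) a) * x) * x ^ n := by
      rw [pow_succ' σ, AlgEquiv.mul_apply, pow_succ']
      noncomm_ring
    rw [hsplit]
    exact add_mem (h.gen_mul_mem ih) (mul_pow_mem (h.commutator_mem _ (h.pow_mem n ha)) n)

theorem mul_mem_right (h : IsOreStep A B x σ) {a : R} (ha : a ∈ A) {n : ℕ} {z : R}
    (hz : z ∈ leftDegreeLT A x n) : z * a ∈ leftDegreeLT A x n := by
  induction n generalizing z with
  | zero => simp_all
  | succ n ih =>
    obtain ⟨b, hb, f, hf, rfl⟩ := mem_succ.1 hz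
    have hsplit : (b * x ^ n + f) * a =
        b * (σ ^ n) a * x ^ n + (b * (x ^ n * a - (σ ^ n) a * x ^ n) + f * a) := by
      noncomm_ring
    rw [hsplit]
    exact mul_pow_add_mem (mul_mem hb (h.pow_mem n ha))
      (add_mem (mul_mem_left hb (h.gen_pow_mul_sub_mem n ha)) (ih hf))

theorem mul_mem (h : IsOreStep A B x σ) {n k : ℕ} {z w : R} (hz : z ∈ leftDegreeLT A x n)
    (hw : w ∈ leftDegreeLT A x k) : z * w ∈ leftDegreeLT A x (n + k) := by
  induction n generalizing z with
  | zero => simp_all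
  | succ n ih =>
    obtain ⟨b, hb, f, hf, rfl⟩ := mem_succ.1 hz
    rw [add_mul, mul_assoc]
    exact add_mem (mul_mem_left hb (mono (by omega) (h.gen_pow_mul_mem n hw)))
      (mono (by omega) (ih hf))

theorem leading_mul_leading (h : IsOreStep A B x σ) {n k : ℕ} {a b f g : R} (ha : a ∈ A)
    (hb : b ∈ A) (hf : f ∈ leftDegreeLT A x n) (hg : g ∈ leftDegreeLT A x k) :
    ∃ e ∈ leftDegreeLT A x (n + k),
      (a * x ^ n + f) * (b * x ^ k + g) = a * (σ ^ n) b * x ^ (n + k) + e := by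
  refine ⟨a * (x ^ n * b - (σ ^ n) b * x ^ n) * x ^ k + a * (x ^ n * g) + f * b * x ^ k + f * g,
    add_mem (add_mem (add_mem ?_ ?_) ?_) (h.mul_mem hf hg), by rw [pow_add]; noncomm_ring⟩
  · exact mul_gen_pow_mem (mul_mem_left ha (h.gen_pow_mul_sub_mem n hb)) k
  · rw [add_comm n k]
    exact mul_mem_left ha (h.gen_pow_mul_mem n hg)
  · exact mul_gen_pow_mem (h.mul_mem_right hb hf) k

theorem exists_mem_leftDegreeLT (h : IsOreStep A B x σ) {z : R} (hz : z ∈ B) :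
    ∃ n, z ∈ leftDegreeLT A x n := by
  rw [h.eq_adjoin] at hz
  induction hz using Algebra.adjoin_induction with
  | mem z hz =>
    rcases hz with rfl | hz
    · exact ⟨2, by simpa using mul_pow_mem (x := z) A.one_mem 1⟩
    · exact ⟨1, mem_one.2 hz⟩
  | algebraMap r => exact ⟨1, mem_one.2 (A.algebraMap_mem r)⟩
  | add z w _ _ ihz ihw =>
    obtain ⟨n, hn⟩ := ihz
    obtain ⟨k, hk⟩ := ihw
    exact ⟨max n k, add_mem (mono (le_max_left _ _) hn) (mono (le_max_right _ _) hk)⟩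
  | mul z w _ _ ihz ihw =>
    obtain ⟨n, hn⟩ := ihz
    obtain ⟨k, hk⟩ := ihw
    exact ⟨n + k, h.mul_mem hn hk⟩

theorem leftDegreeLT_le (h : IsOreStep A B x σ) {n : ℕ} {z : R}
    (hz : z ∈ leftDegreeLT A x n) : z ∈ B := by
  induction n generalizing z with
  | zero => simp_all
  | succ n ih =>
    obtain ⟨b, hb, f, hf, rfl⟩ := mem_succ.1 hz
    exact add_mem (B.mul_mem (h.le hb) (B.pow_mem h.gen_mem n)) (ih hf)

/-- Removing the leading terms divisible by `p` from `b` leaves either nothing or an element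
whose leading coefficient is not divisible by `p`. -/
theorem exists_not_dvd_leading (h : IsOreStep A B x σ) {p : R} {b : R} (hb : b ∈ B)
    (hpb : ¬ ∃ d ∈ B, b = p * d) :
    ∃ n, ∃ a ∈ A, (¬ ∃ d ∈ A, a = p * d) ∧
      ∃ f ∈ leftDegreeLT A x n, ∃ d ∈ B, b = (a * x ^ n + f) + p * d := by
  suffices key : ∀ n, ∀ b₀ ∈ leftDegreeLT A x n, ∀ d₀ ∈ B, b = b₀ + p * d₀ →
      ∃ n, ∃ a ∈ A, (¬ ∃ d ∈ A, a = p * d) ∧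
        ∃ f ∈ leftDegreeLT A x n, ∃ d ∈ B, b = (a * x ^ n + f) + p * d by
    obtain ⟨n, hn⟩ := h.exists_mem_leftDegreeLT hb
    exact key n b hn 0 B.zero_mem (by simp)
  intro n
  induction n with
  | zero =>
    rintro b₀ hb₀ d₀ hd₀ rfl
    exact absurd ⟨d₀, hd₀, by simp_all⟩ hpb
  | succ n ih =>
    intro b₀ hb₀ d₀ hd₀ hb_eq
    obtain ⟨a, ha, f, hf, rfl⟩ := mem_succ.1 hb₀
    by_cases hpa : ∃ d ∈ A, a = p * d
    · obtain ⟨d, hd, rfl⟩ := hpa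
      refine ih f hf (d * x ^ n + d₀)
        (add_mem (B.mul_mem (h.le hd) (B.pow_mem h.gen_mem n)) hd₀) ?_
      rw [hb_eq]; noncomm_ring
    · exact ⟨n, a, ha, hpa, f, hf, d₀, hd₀, hb_eq⟩

end IsOreStep

namespace IsOreExtension

variable {A B : Subalgebra K R} {x : R} {σ : R ≃ₐ[K] R}

theorem leading_unique (h : IsOreExtension A B x σ) {n : ℕ} {a b f g : R} (ha : a ∈ A)
    (hb : b ∈ A) (hf : f ∈ leftDegreeLT A x n) (hg : g ∈ leftDegreeLT A x n)
    (hab : a * x ^ n + f = b * x ^ n + g) : a = b ∧ f = g := by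
  have hdiff : (a - b) * x ^ n = g - f := by
    rw [sub_mul, sub_eq_sub_iff_add_eq_add, hab, add_comm]
  have hab' : a = b := sub_eq_zero.1 <| h.eq_zero_of_mul_pow_mem n (a - b) (A.sub_mem ha hb)
    (hdiff ▸ Submodule.sub_mem _ hg hf)
  subst hab'
  exact ⟨rfl, add_left_cancel hab⟩

theorem linear_unique (h : IsOreExtension A B x σ) {a b f g : R} (ha : a ∈ A) (hb : b ∈ A)
    (hf : f ∈ A) (hg : g ∈ A) (hab : a * x + f = b * x + g) : a = b ∧ f = g :=
  h.leading_unique (n := 1) ha hb (mem_one.2 hf) (mem_one.2 hg) (by simpa using hab)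

theorem noZeroDivisors (h : IsOreExtension A B x σ) [NoZeroDivisors A] : NoZeroDivisors B where
  eq_zero_or_eq_zero_of_mul_eq_zero := by
    rintro ⟨z, hz⟩ ⟨w, hw⟩ hzw
    by_contra! hne
    obtain ⟨hz0, hw0⟩ : z ≠ 0 ∧ w ≠ 0 := by simpa [Subtype.ext_iff] using hne
    replace hzw : z * w = 0 := congrArg Subtype.val hzw
    obtain ⟨_, hzn⟩ := h.exists_mem_leftDegreeLT hz
    obtain ⟨_, hwk⟩ := h.exists_mem_leftDegreeLT hw
    obtain ⟨n, a, ha, ha0, f, hf, rfl⟩ := exists_eq_mul_pow_add hzn hz0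
    obtain ⟨k, b, hb, hb0, g, hg, rfl⟩ := exists_eq_mul_pow_add hwk hw0
    obtain ⟨e, he, hprod⟩ := h.leading_mul_leading ha hb hf hg
    have hσb := h.pow_mem n hb
    have hlead : a * (σ ^ n) b = 0 := h.eq_zero_of_mul_pow_mem (n + k) _ (A.mul_mem ha hσb) (by
      rw [eq_neg_of_add_eq_zero_left (hprod.symm.trans hzw)]; exact neg_mem he)
    rcases eq_zero_or_eq_zero_of_mem_of_mul_eq_zero ha hσb hlead with h0 | h0
    · exact ha0 h0
    · exact hb0 ((map_eq_zero_iff _ (σ ^ n).injective).1 h0)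

theorem mem_leftDegreeLT_of_mul_mem (h : IsOreExtension A B x σ) [NoZeroDivisors A] {p : R}
    (hp : p ∈ A) (hp0 : p ≠ 0) {d : R} (hd : d ∈ B) {N : ℕ}
    (hpd : p * d ∈ leftDegreeLT A x N) : d ∈ leftDegreeLT A x N := by
  obtain ⟨n, hn⟩ := h.exists_mem_leftDegreeLT hd
  induction n with
  | zero => exact mono (Nat.zero_le _) hn
  | succ n ih =>
    by_cases hle : n + 1 ≤ N
    · exact mono hle hn
    obtain ⟨b, hb, f, hf, rfl⟩ := mem_succ.1 hn
    have hlead : p * b * x ^ n ∈ leftDegreeLT A x n := by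
      rw [show p * b * x ^ n = p * (b * x ^ n + f) - p * f by noncomm_ring]
      exact sub_mem (mono (by omega) hpd) (mul_mem_left hp hf)
    have hpb := h.eq_zero_of_mul_pow_mem n _ (A.mul_mem hp hb) hlead
    rcases eq_zero_or_eq_zero_of_mem_of_mul_eq_zero hp hb hpb with h0 | rfl
    · exact absurd h0 hp0
    · exact ih (by simpa using hf)

theorem pow_apply_of_gen_mul (h : IsOreExtension A B x σ) {p : R} (hp : p ∈ A) {κ : Kˣ}
    (hxp : x * p = (κ : K) • (p * x)) (n : ℕ) : (σ ^ n) p = ((κ ^ n : Kˣ) : K) • p := by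
  have hσp : σ p = (κ : K) • p :=
    (h.linear_unique (h.map_mem p hp) (A.smul_mem hp _) (h.commutator_mem p hp) A.zero_mem
      (by rw [add_zero, smul_mul_assoc, ← hxp, add_sub_cancel])).1
  induction n with
  | zero => simp
  | succ n ih =>
    rw [pow_succ', AlgEquiv.mul_apply, ih, map_smul, hσp, smul_smul, pow_succ, Units.val_mul]

/-- The argument is that of `A[x; σ, δ] / (p) ≅ (A / (p))[x; σ̄, δ̄]` being a domain. -/
theorem exists_eq_mul_of_mul_eq_mul (h : IsOreExtension A B x σ) [NoZeroDivisors A] {p : R}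
    (hp : IsPrimeIn K A p) (hnormal : ∀ b ∈ B, ∃ d ∈ B, b * p = p * d) {κ : Kˣ}
    (hxp : x * p = (κ : K) • (p * x)) {b b' d : R} (hb : b ∈ B) (hb' : b' ∈ B) (hd : d ∈ B)
    (hbb' : b * b' = p * d) : (∃ d ∈ B, b = p * d) ∨ ∃ d ∈ B, b' = p * d := by
  obtain ⟨hpA, hp0, -, -, -, hprime⟩ := hp
  by_contra! hcon
  obtain ⟨n, a, ha, hpa, f, hf, d₁, hd₁, rfl⟩ :=
    h.exists_not_dvd_leading (p := p) hb (by push Not; exact hcon.1)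
  obtain ⟨k, a', ha', hpa', f', hf', d₂, hd₂, rfl⟩ :=
    h.exists_not_dvd_leading (p := p) hb' (by push Not; exact hcon.2)
  obtain ⟨r, hr, hprod⟩ := h.leading_mul_leading ha ha' hf hf'
  have hσa' := h.pow_mem n ha'
  have hreduced : ∃ s ∈ B, a * (σ ^ n) a' * x ^ (n + k) + r = p * s := by
    obtain ⟨d₃, hd₃, hcomm⟩ := hnormal (a * x ^ n + f)
      (h.leftDegreeLT_le (mul_pow_add_mem ha hf))
    refine ⟨d - d₁ * (a' * x ^ k + f' + p * d₂) - d₃ * d₂,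
      sub_mem (sub_mem hd (B.mul_mem hd₁ hb')) (B.mul_mem hd₃ hd₂), ?_⟩
    rw [← hprod, mul_sub, mul_sub, ← hbb', ← mul_assoc p d₃ d₂, ← hcomm]
    noncomm_ring
  obtain ⟨s, hs, hs_eq⟩ := hreduced
  obtain ⟨g, hg, s', hs', rfl⟩ := mem_succ.1 <|
    h.mem_leftDegreeLT_of_mul_mem hpA hp0 hs (N := n + k + 1)
      (hs_eq ▸ mul_pow_add_mem (A.mul_mem ha hσa') hr)
  rw [mul_add, ← mul_assoc] at hs_eq
  have hlead := (h.leading_unique (A.mul_mem ha hσa') (A.mul_mem hpA hg) hr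
    (mul_mem_left hpA hs') hs_eq).1
  rcases hprime a ha _ hσa' ⟨g, hg, hlead⟩ with hdvd | ⟨t, ht, hdvd⟩
  · exact hpa hdvd
  · refine hpa' ⟨((κ ^ n : Kˣ) : K)⁻¹ • (σ ^ n).symm t,
      A.smul_mem (h.pow_symm_mem n ht) _, (σ ^ n).injective ?_⟩
    rw [hdvd, map_mul, map_smul, h.pow_apply_of_gen_mul hpA hxp, AlgEquiv.apply_symm_apply,
      smul_mul_smul_comm, mul_inv_cancel₀ (Units.ne_zero _), one_smul]

theorem isPrimeIn_of_gen_mul (h : IsOreExtension A B x σ) [NoZeroDivisors A] {p : R}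
    (hp : IsPrimeIn K A p) {κ : Kˣ} (hxp : x * p = (κ : K) • (p * x)) : IsPrimeIn K B p := by
  obtain ⟨hpA, hp0, hnonunit, hleft, hright, -⟩ := id hp
  have hleft' : ∀ b ∈ B, ∃ d ∈ B, b * p = p * d := by
    rw [h.eq_adjoin]
    refine fun b hb => exists_mul_eq_mul_of_mem_adjoin ?_ hb
    rw [← h.eq_adjoin, Set.forall_mem_insert]
    exact ⟨⟨(κ : K) • x, B.smul_mem h.gen_mem _, by rw [hxp, mul_smul_comm]⟩,
      fun a ha => (hleft a ha).imp fun d hd => ⟨h.le hd.1, hd.2⟩⟩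
  have hright' : ∀ b ∈ B, ∃ d ∈ B, p * b = d * p := by
    rw [h.eq_adjoin]
    refine fun b hb => exists_mul_eq_mul_of_mem_adjoin' ?_ hb
    rw [← h.eq_adjoin, Set.forall_mem_insert]
    exact ⟨⟨(κ : K)⁻¹ • x, B.smul_mem h.gen_mem _, by
        rw [smul_mul_assoc, hxp, smul_smul, inv_mul_cancel₀ κ.ne_zero, one_smul]⟩,
      fun a ha => (hright a ha).imp fun d hd => ⟨h.le hd.1, hd.2⟩⟩
  refine ⟨h.le hpA, hp0, ?_, hleft', hright',
    fun b hb b' hb' ⟨d, hd, hbb'⟩ => h.exists_eq_mul_of_mul_eq_mul hp hleft' hxp hb hb' hd hbb'⟩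
  rintro ⟨u, hu, hpu, hup⟩
  have hu' : u ∈ leftDegreeLT A x 1 := h.mem_leftDegreeLT_of_mul_mem hpA hp0 hu
    (by rw [hpu, mem_one]; exact A.one_mem)
  exact hnonunit ⟨u, mem_one.1 hu', hpu, hup⟩

end IsOreExtension

end OreExtension

section Monomials

variable {K : Type u} [Field K] {R : Type v} [Ring R] [Algebra K R] {N : ℕ} (x : Fin N → R)

theorem gen_mem_Rsub {l : Fin N} {k : ℕ} (hlk : (l : ℕ) < k) : x l ∈ Rsub K x k :=
  Algebra.subset_adjoin ⟨l, hlk, rfl⟩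

theorem Rsub_mono : Monotone (Rsub K x) := fun _ _ hkl =>
  Algebra.adjoin_mono (Set.image_mono fun _ ha => lt_of_lt_of_le ha hkl)

theorem Rsub_zero : Rsub K x 0 = ⊥ := by simp [Rsub]

theorem Rsub_succ (k : Fin N) :
    Rsub K x (k + 1) = Algebra.adjoin K (insert (x k) (Rsub K x k : Set R)) := by
  have hgens : x '' {l : Fin N | (l : ℕ) < k + 1} =
      insert (x k) (x '' {l : Fin N | (l : ℕ) < k}) := by
    rw [← Set.image_insert_eq]
    congr 1
    ext l
    simp only [Set.mem_ofPred_eq, Set.mem_insert_iff, Fin.ext_iff]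
    omega
  rw [Rsub, Rsub, hgens, Algebra.adjoin_insert_adjoin]

theorem prod_map_pow_mul_pow {k : Fin N} {f : Fin N → ℕ} (hf : ∀ l, k ≤ l → f l = 0) (n : ℕ)
    {L : List (Fin N)} (hL : L.Pairwise (· < ·)) (hk : k ∈ L) :
    (L.map fun l => x l ^ f l).prod * x k ^ n =
      (L.map fun l => x l ^ Function.update f k n l).prod := by
  induction L with
  | nil => simp at hk
  | cons a L ih =>
    obtain ⟨ha, hL'⟩ := List.pairwise_cons.1 hL
    simp only [List.map_cons, List.prod_cons]
    by_cases hak : k = a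
    · subst hak
      have htail : L.map (fun l => x l ^ f l) = L.map fun l => x l ^ Function.update f k n l :=
        List.map_congr_left fun l hl => by rw [Function.update_of_ne (ha l hl).ne']
      have hone : (L.map fun l => x l ^ f l).prod = 1 :=
        List.prod_eq_one (by simpa using fun l hl => by rw [hf l (ha l hl).le, pow_zero])
      rw [← htail, hone, hf k le_rfl, Function.update_self]
      simp
    · rw [mul_assoc, ih hL' ((List.mem_cons.1 hk).resolve_left hak),
        Function.update_of_ne (Ne.symm hak)]

theorem ordMonomial_mul_pow {k : Fin N} {f : Fin N → ℕ} (hf : ∀ l, k ≤ l → f l = 0) (n : ℕ) :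
    ordMonomial x f * x k ^ n = ordMonomial x (Function.update f k n) :=
  prod_map_pow_mul_pow x hf n (List.pairwise_lt_finRange N) (List.mem_finRange k)

theorem mul_pow_mem_span_ordMonomial {k : Fin N} {a : R}
    (ha : a ∈ Submodule.span K (ordMonomial x '' {f | ∀ l : Fin N, k ≤ l → f l = 0})) (n : ℕ) :
    a * x k ^ n ∈
      Submodule.span K (ordMonomial x '' {f | (∀ l : Fin N, k < l → f l = 0) ∧ f k = n}) := by
  refine (Submodule.map_span_le (LinearMap.mulRight K (x k ^ n)) _ _).2 ?_ ⟨a, ha, rfl⟩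
  rintro _ ⟨f, hf, rfl⟩
  refine Submodule.subset_span ⟨Function.update f k n, ⟨fun l hl => ?_, by simp⟩,
    (ordMonomial_mul_pow x hf n).symm⟩
  rw [Function.update_of_ne hl.ne']
  exact hf l hl.le

theorem leftDegreeLT_le_span_ordMonomial {A : Subalgebra K R} {k : Fin N}
    (hA : A.toSubmodule ≤
      Submodule.span K (ordMonomial x '' {f | ∀ l : Fin N, k ≤ l → f l = 0})) (n : ℕ) :
    leftDegreeLT A (x k) n ≤
      Submodule.span K (ordMonomial x '' {f | (∀ l : Fin N, k < l → f l = 0) ∧ f k < n}) := by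
  induction n with
  | zero => simp
  | succ n ih =>
    intro z hz
    obtain ⟨a, ha, f, hf, rfl⟩ := leftDegreeLT.mem_succ.1 hz
    refine add_mem
      (Submodule.span_mono (Set.image_mono ?_) (mul_pow_mem_span_ordMonomial x (hA ha) n))
      (Submodule.span_mono (Set.image_mono ?_) (ih hf))
    · exact fun f hf => ⟨hf.1, by have := hf.2; omega⟩
    · exact fun f hf => ⟨hf.1, by have := hf.2; omega⟩

variable {x}

theorem eq_zero_of_mul_pow_eq_zero (hx : LinearIndependent K (ordMonomial (R := R) x)) {k : Fin N}
    {a : R} (ha : a ∈ Submodule.span K (ordMonomial x '' {f | ∀ l : Fin N, k ≤ l → f l = 0}))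
    {n : ℕ} (han : a * x k ^ n = 0) : a = 0 := by
  obtain ⟨c, hc, rfl⟩ := (Finsupp.mem_span_image_iff_linearCombination K).1 ha
  have hmap : Finsupp.linearCombination K (ordMonomial x)
      (c.mapDomain fun f => Function.update f k n) = 0 := by
    rw [Finsupp.linearCombination_mapDomain, ← han, Finsupp.linearCombination_apply,
      Finsupp.linearCombination_apply, Finsupp.sum, Finsupp.sum, Finset.sum_mul]
    refine Finset.sum_congr rfl fun f hf => ?_
    rw [smul_mul_assoc, ordMonomial_mul_pow x (hc hf), Function.comp_apply]
  have hinj : Set.InjOn (fun f => Function.update f k n) {f | ∀ l : Fin N, k ≤ l → f l = 0} := by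
    intro f hf g hg hfg
    funext l
    rcases eq_or_ne l k with rfl | hl
    · rw [hf l le_rfl, hg l le_rfl]
    · simpa [hl] using congrFun hfg l
  have hc0 : c = 0 := Finsupp.mapDomain_injOn (M := K) _ hinj hc (by simp)
    (by simpa using linearIndependent_iff.1 hx _ hmap)
  rw [hc0, map_zero]

theorem eq_zero_of_mul_pow_mem_leftDegreeLT (hx : LinearIndependent K (ordMonomial (R := R) x))
    {A : Subalgebra K R} {k : Fin N}
    (hA : A.toSubmodule ≤
      Submodule.span K (ordMonomial x '' {f | ∀ l : Fin N, k ≤ l → f l = 0}))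
    {n : ℕ} {a : R} (ha : a ∈ A) (han : a * x k ^ n ∈ leftDegreeLT A (x k) n) : a = 0 := by
  refine eq_zero_of_mul_pow_eq_zero hx (hA ha) (n := n) ?_
  refine Submodule.disjoint_def.1 (hx.disjoint_span_image ?_) _
    (mul_pow_mem_span_ordMonomial x (hA ha) n) (leftDegreeLT_le_span_ordMonomial x hA n han)
  exact Set.disjoint_left.2 fun f hf hf' => hf'.2.ne hf.2

theorem map_ordMonomial {F : Type*} [FunLike F R R] [MonoidHomClass F R R] (φ : F) {χ : Fin N → K}
    (hχ : ∀ l, φ (x l) = χ l • x l) (f : Fin N → ℕ) :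
    φ (ordMonomial x f) = (∏ l, χ l ^ f l) • ordMonomial x f := by
  rw [ordMonomial, Fin.prod_univ_def]
  generalize List.finRange N = L
  induction L with
  | nil => simp
  | cons a L ih =>
    simp only [List.map_cons, List.prod_cons, map_mul, map_pow, hχ, ih, smul_pow,
      smul_mul_smul_comm]

theorem prod_pow_eq_of_map_linearCombination (hx : LinearIndependent K (ordMonomial (R := R) x))
    (φ : R ≃ₐ[K] R) {χ : Fin N → K} (hχ : ∀ l, φ (x l) = χ l • x l) {c : (Fin N → ℕ) →₀ K} {s : K}
    (hc : φ (Finsupp.linearCombination K (ordMonomial x) c) =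
      s • Finsupp.linearCombination K (ordMonomial x) c) {f : Fin N → ℕ} (hf : c f ≠ 0) :
    ∏ l, χ l ^ f l = s := by
  have hrel : ∑ g ∈ c.support, ((∏ l, χ l ^ g l - s) * c g) • ordMonomial x g = 0 := by
    rw [Finsupp.linearCombination_apply, Finsupp.sum, map_sum, Finset.smul_sum, ← sub_eq_zero,
      ← Finset.sum_sub_distrib] at hc
    rw [← hc]
    refine Finset.sum_congr rfl fun g _ => ?_
    rw [map_smul, map_ordMonomial φ hχ, smul_smul, smul_smul, ← sub_smul]
    ring_nf
  have hcoeff := linearIndependent_iff'.1 hx _ _ hrel f (Finsupp.mem_support_iff.2 hf)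
  exact sub_eq_zero.1 ((mul_eq_zero.1 hcoeff).resolve_right hf)

end Monomials

namespace QNA

variable {K : Type u} [Field K] {R : Type v} [Ring R] [Algebra K R] {r N : ℕ} (Q : QNA K R N r)

include Q in
theorem nontrivial : Nontrivial R :=
  nontrivial_of_ne _ _ (Q.pbw.ne_zero 0)

theorem act_mem_Rsub (ξ : Torus K r) {k : ℕ} {a : R} (ha : a ∈ Rsub K Q.x k) :
    Q.act ξ a ∈ Rsub K Q.x k := by
  unfold Rsub at ha
  induction ha using Algebra.adjoin_induction with
  | mem a ha =>
    obtain ⟨l, hl, rfl⟩ := ha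
    obtain ⟨f, hf⟩ := Q.eigenvec l
    rw [hf ξ]
    exact Subalgebra.smul_mem _ (gen_mem_Rsub Q.x hl) _
  | algebraMap s => rw [AlgEquiv.commutes]; exact Subalgebra.algebraMap_mem _ _
  | add a b _ _ iha ihb => rw [map_add]; exact add_mem iha ihb
  | mul a b _ _ iha ihb => rw [map_mul]; exact mul_mem iha ihb

theorem isOreStep (k : Fin N) :
    IsOreStep (Rsub K Q.x k) (Rsub K Q.x (k + 1)) (Q.x k) (Q.act (Q.h k)) where
  eq_adjoin := Rsub_succ Q.x k
  map_mem _ ha := Q.act_mem_Rsub _ ha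
  symm_mem a ha := by
    rw [show (Q.act (Q.h k)).symm a = Q.act (Q.h k)⁻¹ a by rw [map_inv]; rfl]
    exact Q.act_mem_Rsub _ ha
  commutator_mem a ha := Q.stable k a ha

theorem Rsub_le_span {k : ℕ} (hk : k ≤ N) :
    (Rsub K Q.x k).toSubmodule ≤
      Submodule.span K (ordMonomial Q.x '' {f | ∀ l : Fin N, k ≤ l → f l = 0}) := by
  induction k with
  | zero =>
    intro z hz
    rw [Rsub_zero, Subalgebra.mem_toSubmodule, Algebra.mem_bot] at hz
    obtain ⟨c, rfl⟩ := hz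
    rw [Algebra.algebraMap_eq_smul_one]
    refine Submodule.smul_mem _ c (Submodule.subset_span ⟨0, by simp, ?_⟩)
    exact List.prod_eq_one (by simp)
  | succ k ih =>
    intro z hz
    obtain ⟨n, hn⟩ := (Q.isOreStep ⟨k, hk⟩).exists_mem_leftDegreeLT hz
    exact Submodule.span_mono (Set.image_mono fun f hf => hf.1)
      (leftDegreeLT_le_span_ordMonomial Q.x (k := ⟨k, hk⟩) (ih (by omega)) n hn)

theorem isOreExtension (k : Fin N) :
    IsOreExtension (Rsub K Q.x k) (Rsub K Q.x (k + 1)) (Q.x k) (Q.act (Q.h k)) where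
  toIsOreStep := Q.isOreStep k
  eq_zero_of_mul_pow_mem _ _ ha han :=
    eq_zero_of_mul_pow_mem_leftDegreeLT Q.pbw (Q.Rsub_le_span k.2.le) ha han

theorem Rsub_top : Rsub K Q.x N = ⊤ := by
  rw [← Q.gen, Rsub, ← Set.image_univ]
  simp

theorem noZeroDivisors_Rsub {k : ℕ} (hk : k ≤ N) : NoZeroDivisors (Rsub K Q.x k) := by
  induction k with
  | zero =>
    have := Q.nontrivial
    rw [Rsub_zero]
    exact (Algebra.botEquiv K R).injective.noZeroDivisors _ (map_zero _) (map_mul _)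
  | succ k ih =>
    have := ih (by omega)
    exact (Q.isOreExtension ⟨k, hk⟩).noZeroDivisors

include Q in
theorem noZeroDivisors : NoZeroDivisors R := by
  have := Q.noZeroDivisors_Rsub le_rfl
  rw [Q.Rsub_top] at this
  exact ⟨fun hab => eq_zero_or_eq_zero_of_mem_of_mul_eq_zero (K := K) (A := ⊤) trivial trivial hab⟩

include Q in
theorem isDomain : IsDomain R :=
  have := Q.nontrivial
  have := Q.noZeroDivisors
  NoZeroDivisors.to_isDomain R

theorem exists_linearCombination_ordMonomial (z : R) :
    ∃ c : (Fin N → ℕ) →₀ K, Finsupp.linearCombination K (ordMonomial Q.x) c = z := by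
  have hz : z ∈ (Rsub K Q.x N).toSubmodule := by rw [Q.Rsub_top]; trivial
  obtain ⟨c, -, hc⟩ :=
    (Finsupp.mem_span_image_iff_linearCombination K).1 (Q.Rsub_le_span le_rfl hz)
  exact ⟨c, hc⟩

end QNA

section QuantumDeterminant

variable {K : Type u} [Field K]

section Algebra

variable {E : Type*} [Ring E] [Algebra K E] {ι : Type*}

theorem mul_prod_map_eq_smul {W : ι → E} {w : E} {c : K} {l : List ι}
    (hwW : ∀ i ∈ l, w * W i = c • (W i * w)) :
    w * (l.map W).prod = c ^ l.length • ((l.map W).prod * w) := by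
  induction l with
  | nil => simp
  | cons i l ih =>
    rw [List.forall_mem_cons] at hwW
    rw [List.map_cons, List.prod_cons, List.length_cons, ← mul_assoc, hwW.1, smul_mul_assoc,
      mul_assoc, ih hwW.2, mul_smul_comm, smul_smul, mul_assoc, pow_succ']

theorem exists_prod_map_add_eq {W L : ι → E} {X t w : E} {c a : K} {l : List ι} (hX : X * X = 0)
    (hXW : ∀ i ∈ l, X * W i = c • (W i * X)) (hXL : ∀ i ∈ l, X * L i = L i * X)
    (htW : ∀ i ∈ l, t * W i = W i * t - a • (L i * w))
    (hwW : ∀ i ∈ l, w * W i = c • (W i * w)) :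
    ∃ H, (l.map fun i => W i + L i * X).prod = (l.map W).prod + H * X ∧
      t * (l.map W).prod = (l.map W).prod * t - a • (H * w) ∧ X * (H * X) = 0 := by
  induction l with
  | nil => exact ⟨0, by simp⟩
  | cons i l ih =>
    have hXP := mul_prod_map_eq_smul fun j hj => hXW j (List.mem_cons_of_mem i hj)
    have hwP := mul_prod_map_eq_smul fun j hj => hwW j (List.mem_cons_of_mem i hj)
    simp only [List.forall_mem_cons] at hXW hXL htW hwW
    obtain ⟨H, hprod, hcomm, hXHX⟩ := ih hXW.2 hXL.2 htW.2 hwW.2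
    simp only [List.map_cons, List.prod_cons]
    set P := (l.map W).prod
    refine ⟨W i * H + c ^ l.length • (L i * P), ?_, ?_, ?_⟩
    · have hvanish : L i * X * (H * X) = 0 := by rw [mul_assoc, hXHX, mul_zero]
      rw [hprod, add_mul, mul_add, mul_add, hvanish, mul_assoc (L i), hXP]
      simp only [add_mul, smul_mul_assoc, mul_smul_comm, mul_assoc]
      abel
    · rw [← mul_assoc, htW.1, sub_mul, mul_assoc (W i), hcomm, smul_mul_assoc, mul_assoc (L i), hwP]
      simp only [mul_sub, add_mul, mul_smul_comm, smul_mul_assoc, mul_assoc]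
      module
    · have hleft : X * (W i * H * X) = 0 := by
        rw [mul_assoc, ← mul_assoc X, hXW.1, smul_mul_assoc, mul_assoc, hXHX, mul_zero, smul_zero]
      have hright : X * (L i * P * X) = 0 := by
        rw [mul_assoc, ← mul_assoc X, hXL.1, mul_assoc, ← mul_assoc X P, hXP, smul_mul_assoc,
          mul_assoc, hX, mul_zero, smul_zero, mul_zero]
      rw [add_mul, mul_add, hleft, smul_mul_assoc, mul_smul_comm, hright, smul_zero, add_zero]

theorem prod_map_add_mul_add {W L : ι → E} {X t w : E} {c a : K} {l : List ι} (ha : a ≠ 0)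
    (hX : X * X = 0) (hXW : ∀ i ∈ l, X * W i = c • (W i * X))
    (hXL : ∀ i ∈ l, X * L i = L i * X) (htW : ∀ i ∈ l, t * W i = W i * t - a • (L i * w))
    (hwW : ∀ i ∈ l, w * W i = c • (W i * w)) (hXw : X * w = c • (w * X)) (hXt : X * t = t * X) :
    (l.map fun i => W i + L i * X).prod * (w + t * X) = (l.map W).prod * w +
      ((l.map W).prod * t - (c * a⁻¹) • (t * (l.map W).prod - (l.map W).prod * t)) * X := by
  obtain ⟨H, hprod, hcomm, -⟩ := exists_prod_map_add_eq hX hXW hXL htW hwW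
  have hHw : H * w = -a⁻¹ • (t * (l.map W).prod - (l.map W).prod * t) := by
    rw [hcomm, sub_sub_cancel_left, neg_smul_neg, smul_smul, inv_mul_cancel₀ ha, one_smul]
  have hHXw : H * X * w = c • (H * w * X) := by rw [mul_assoc, hXw, mul_smul_comm, mul_assoc]
  have hHXtX : H * X * (t * X) = 0 := by
    rw [mul_assoc, ← mul_assoc X, hXt, mul_assoc t, hX, mul_zero, mul_zero]
  rw [hprod, add_mul, mul_add, mul_add, hHXw, hHXtX, hHw, sub_mul]
  simp only [smul_mul_assoc, mul_assoc]
  module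

theorem mul_sub_smul_commutator {X P t : E} {c : K} (d : K) (hXP : X * P = c • (P * X))
    (hXt : X * t = t * X) :
    X * (P * t - d • (t * P - P * t)) = c • ((P * t - d • (t * P - P * t)) * X) := by
  have hXPt : X * (P * t) = c • (P * t * X) := by
    rw [← mul_assoc, hXP, smul_mul_assoc, mul_assoc, hXt, mul_assoc]
  have hXtP : X * (t * P) = c • (t * P * X) := by
    rw [← mul_assoc, hXt, mul_assoc, hXP, mul_smul_comm, mul_assoc]
  rw [mul_sub, mul_smul_comm, mul_sub, hXPt, hXtP, sub_mul, smul_mul_assoc, sub_mul]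
  module

end Algebra

/-- The number of inversions of a sequence of natural numbers. -/
def inversions {n : ℕ} (f : Fin n → ℕ) : ℕ :=
  (Finset.univ.filter fun z : Fin n × Fin n => z.1 < z.2 ∧ f z.2 < f z.1).card

theorem inversions_succ {n : ℕ} (f : Fin (n + 1) → ℕ) :
    inversions f =
      (Finset.univ.filter fun a : Fin n => f a.succ < f 0).card +
        inversions fun a : Fin n => f a.succ := by
  simp only [inversions, Finset.card_filter, Fintype.sum_prod_type, Fin.sum_univ_succ]
  simp

theorem injective_and_image_eq_iff {n : ℕ} (f : Fin (n + 1) → ℕ) (S : Finset ℕ) :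
    (f.Injective ∧ Finset.univ.image f = S) ↔
      f 0 ∈ S ∧ (fun a : Fin n => f a.succ).Injective ∧
        Finset.univ.image (fun a : Fin n => f a.succ) = S.erase (f 0) := by
  have hinj : f.Injective ↔
      (fun a : Fin n => f a.succ).Injective ∧ ∀ a : Fin n, f a.succ ≠ f 0 := by
    rw [← Fin.cons_self_tail f, Fin.cons_injective_iff]
    simp only [Fin.cons_zero, Fin.cons_succ, Set.mem_range, not_exists]
    exact and_comm
  have himage : Finset.univ.image f =
      insert (f 0) (Finset.univ.image fun a : Fin n => f a.succ) := by
    ext s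
    simp [Fin.exists_fin_succ, eq_comm]
  rw [hinj, himage]
  constructor
  · rintro ⟨⟨hsucc, hne⟩, rfl⟩
    exact ⟨Finset.mem_insert_self _ _, hsucc, (Finset.erase_insert (by simpa using hne)).symm⟩
  · rintro ⟨hS, hsucc, himg⟩
    refine ⟨⟨hsucc, fun a ha => ?_⟩, by rw [himg, Finset.insert_erase hS]⟩
    have hmem : f a.succ ∈ S.erase (f 0) := himg ▸ Finset.mem_image_of_mem _ (Finset.mem_univ a)
    exact Finset.ne_of_mem_erase hmem ha

theorem card_filter_lt_image {n : ℕ} {f : Fin (n + 1) → ℕ} (hf : f.Injective) :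
    ((Finset.univ.image f).filter (· < f 0)).card =
      (Finset.univ.filter fun a : Fin n => f a.succ < f 0).card := by
  rw [Finset.filter_image, Finset.card_image_of_injective _ hf]
  simp only [Finset.card_filter, Fin.sum_univ_succ, lt_irrefl, if_false, zero_add]

variable {R : Type v} [Ring R] [Algebra K R]

/-- The quantum determinant of a square matrix, with `p` in place of `-q`. -/
def quantumDet (p : K) {k : ℕ} (U : Fin k → Fin k → R) : R :=
  ∑ σ : Equiv.Perm (Fin k), p ^ invCount σ • ((List.finRange k).map fun a => U a (σ a)).prod

variable (K) in
/-- Left multiplication of the coefficients of `R ⊗ Λ_q`. An element of this tensor product of `R`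
with a quantum exterior algebra is encoded by its coefficients on the monomials
`ξ_{s₁} ⋯ ξ_{s_k}`, indexed by finite sets `{s₁ < ⋯ < s_k}`. -/
abbrev coeffMul : R →ₐ[K] Module.End Rᵐᵒᵖ (Finset ℕ → R) :=
  Algebra.lsmul K Rᵐᵒᵖ (Finset ℕ → R)

theorem coeffMul_apply (t : R) (F : Finset ℕ → R) (S : Finset ℕ) :
    coeffMul K t F S = t * F S := rfl

/-- Left multiplication by the generator `ξ_b` of the quantum exterior algebra, whose relations are
`ξ_b ^ 2 = 0` and `ξ_d ξ_b = p ξ_b ξ_d` for `b < d`. -/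
def exteriorGen (p : K) (b : ℕ) : Module.End Rᵐᵒᵖ (Finset ℕ → R) where
  toFun F S := if b ∈ S then p ^ (S.filter (· < b)).card • F (S.erase b) else 0
  map_add' F G := by
    funext S
    by_cases h : b ∈ S <;> simp [h]
  map_smul' c F := by
    funext S
    by_cases h : b ∈ S <;> simp [h]

theorem exteriorGen_apply (p : K) (b : ℕ) (F : Finset ℕ → R) (S : Finset ℕ) :
    exteriorGen p b F S = if b ∈ S then p ^ (S.filter (· < b)).card • F (S.erase b) else 0 := rfl

theorem exteriorGen_mul_coeffMul (p : K) (b : ℕ) (t : R) :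
    exteriorGen p b * coeffMul K t = coeffMul K t * exteriorGen p b := by
  ext F S
  by_cases h : b ∈ S <;> simp [exteriorGen_apply, h]

theorem exteriorGen_mul_self (p : K) (b : ℕ) :
    exteriorGen (R := R) p b * exteriorGen p b = 0 := by
  ext F S
  simp [exteriorGen_apply]

theorem exteriorGen_mul_exteriorGen (p : K) {b d : ℕ} (hbd : b < d) :
    exteriorGen (R := R) p d * exteriorGen p b = p • (exteriorGen p b * exteriorGen p d) := by
  ext F S
  simp only [Module.End.mul_apply, LinearMap.smul_apply, Pi.smul_apply, exteriorGen_apply,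
    Finset.mem_erase]
  by_cases hb : b ∈ S <;> by_cases hd : d ∈ S <;> simp only [hb, hd, hbd.ne, hbd.ne', ne_eq,
    not_false_eq_true, and_true, if_true, if_false, smul_zero, and_false]
  have herase_d : (S.erase d).filter (· < b) = S.filter (· < b) := by
    ext s
    simp only [Finset.mem_filter, Finset.mem_erase]
    exact ⟨fun h => ⟨h.1.2, h.2⟩, fun h => ⟨⟨by omega, h.1⟩, h.2⟩⟩
  have hmem : b ∈ S.filter (· < d) := by simp [hb, hbd]
  rw [smul_smul, smul_smul, smul_smul, Finset.erase_right_comm, ← pow_add, mul_assoc, ← pow_add,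
    ← pow_succ', herase_d, Finset.filter_erase, ← Finset.card_erase_add_one hmem]
  ring_nf

theorem prod_exteriorGen_apply (p : K) {n : ℕ} (f : Fin n → ℕ) (S : Finset ℕ) :
    ((List.finRange n).map fun a => exteriorGen p (f a)).prod (Pi.single ∅ 1 : Finset ℕ → R) S =
      if f.Injective ∧ Finset.univ.image f = S then p ^ inversions f • (1 : R) else 0 := by
  induction n generalizing S with
  | zero =>
    rcases eq_or_ne S ∅ with rfl | hS
    · simp [inversions, Function.injective_of_subsingleton]
    · simp [hS, hS.symm]
  | succ n ih =>
    have ih' := ih (fun a => f a.succ) (S.erase (f 0))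
    rw [List.finRange_succ, List.map_cons, List.prod_cons, List.map_map, Module.End.mul_apply,
      exteriorGen_apply]
    simp only [Function.comp_def, ih']
    by_cases hf : f.Injective ∧ Finset.univ.image f = S
    · obtain ⟨hS, hsucc⟩ := (injective_and_image_eq_iff f S).1 hf
      rw [if_pos hS, if_pos hsucc, if_pos hf, smul_smul, ← pow_add, inversions_succ, ← hf.2,
        card_filter_lt_image hf.1]
    · rw [if_neg hf]
      split_ifs with hS hsucc
      · exact absurd ((injective_and_image_eq_iff f S).2 ⟨hS, hsucc⟩) hf
      · exact smul_zero _
      · rfl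

/-- Left multiplication by the linear form `∑ b, u_b ξ_b`. -/
def rowOperator (p : K) {k : ℕ} (u : Fin k → R) : Module.End Rᵐᵒᵖ (Finset ℕ → R) :=
  ∑ b : Fin k, coeffMul K (u b) * exteriorGen p b

theorem rowOperator_succ (p : K) {k : ℕ} (u : Fin (k + 1) → R) :
    rowOperator p u = rowOperator p (fun b : Fin k => u b.castSucc) +
      coeffMul K (u (Fin.last k)) * exteriorGen p k :=
  Fin.sum_univ_castSucc _

theorem rowOperator_mul_rowOperator (p : K) {k : ℕ} (u v : Fin k → R) :
    rowOperator p u * rowOperator p v =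
      ∑ z : Fin k × Fin k,
        coeffMul K (u z.1 * v z.2) * (exteriorGen p z.1 * exteriorGen p z.2) := by
  rw [rowOperator, rowOperator, Finset.sum_mul_sum, Fintype.sum_prod_type]
  refine Finset.sum_congr rfl fun b _ => Finset.sum_congr rfl fun d _ => ?_
  rw [map_mul, mul_assoc, ← mul_assoc (exteriorGen p _), exteriorGen_mul_coeffMul]
  simp only [mul_assoc]

theorem exteriorGen_mul_rowOperator (p : K) {k : ℕ} (u : Fin k → R) :
    exteriorGen p k * rowOperator p u = p • (rowOperator p u * exteriorGen p k) := by
  rw [rowOperator, Finset.mul_sum, Finset.sum_mul, Finset.smul_sum]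
  refine Finset.sum_congr rfl fun b _ => ?_
  rw [← mul_assoc, exteriorGen_mul_coeffMul, mul_assoc, exteriorGen_mul_exteriorGen p b.2,
    mul_smul_comm, mul_assoc]

theorem prod_rowOperator (p : K) {n k : ℕ} (U : Fin n → Fin k → R) :
    ((List.finRange n).map fun a => rowOperator p (U a)).prod =
      ∑ f : Fin n → Fin k, coeffMul K ((List.finRange n).map fun a => U a (f a)).prod *
        ((List.finRange n).map fun a => exteriorGen p (f a : ℕ)).prod := by
  induction n with
  | zero => simp
  | succ n ih =>
    rw [← (Fin.consEquiv fun _ => Fin k).sum_comp, Fintype.sum_prod_type]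
    simp only [List.finRange_succ, List.map_cons, List.map_map, List.prod_cons, Function.comp_def,
      ih, Fin.consEquiv, Equiv.coe_fn_mk, Fin.cons_zero, Fin.cons_succ]
    rw [rowOperator, Finset.sum_mul_sum]
    refine Finset.sum_congr rfl fun b _ => Finset.sum_congr rfl fun f _ => ?_
    rw [map_mul, mul_assoc, ← mul_assoc (exteriorGen p _), exteriorGen_mul_coeffMul]
    simp only [mul_assoc]

theorem prod_rowOperator_apply (p : K) {n k : ℕ} (U : Fin n → Fin k → R) (S : Finset ℕ) :
    ((List.finRange n).map fun a => rowOperator p (U a)).prod (Pi.single ∅ 1) S =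
      ∑ f : Fin n → Fin k,
        if (fun a => (f a : ℕ)).Injective ∧ Finset.univ.image (fun a => (f a : ℕ)) = S then
          (p ^ inversions fun a => (f a : ℕ)) • ((List.finRange n).map fun a => U a (f a)).prod
        else 0 := by
  rw [prod_rowOperator, LinearMap.sum_apply, Finset.sum_apply]
  refine Finset.sum_congr rfl fun f _ => ?_
  rw [Module.End.mul_apply, coeffMul_apply, prod_exteriorGen_apply]
  split_ifs <;> simp

theorem prod_rowOperator_apply_range (p : K) {k : ℕ} (U : Fin k → Fin k → R) :
    ((List.finRange k).map fun a => rowOperator p (U a)).prod (Pi.single ∅ 1) (Finset.range k) =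
      quantumDet p U := by
  rw [prod_rowOperator_apply]
  symm
  refine Finset.sum_of_injOn (fun σ : Equiv.Perm (Fin k) => (σ : Fin k → Fin k))
    Equiv.coe_fn_injective.injOn (by simp) (fun f _ hf => if_neg ?_) fun σ _ => ?_
  · rintro ⟨hinj, -⟩
    have hbij : f.Bijective :=
      Finite.injective_iff_bijective.1 (Fin.val_injective.of_comp_iff f |>.1 hinj)
    exact hf ⟨Equiv.ofBijective f hbij, by simp, rfl⟩
  · have himage : Finset.univ.image (fun a => (σ a : ℕ)) = Finset.range k := by
      rw [← Function.comp_def, ← Finset.image_image, Finset.image_univ_equiv]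
      ext s
      simp [Fin.exists_iff]
    rw [if_pos ⟨Fin.val_injective.comp σ.injective, himage⟩]
    rfl

theorem prod_rowOperator_apply_eq_zero (p : K) {n k : ℕ} (U : Fin n → Fin k → R) {S : Finset ℕ}
    (hS : k ∈ S) :
    ((List.finRange n).map fun a => rowOperator p (U a)).prod (Pi.single ∅ 1) S = 0 := by
  rw [prod_rowOperator_apply]
  refine Finset.sum_eq_zero fun f _ => if_neg ?_
  rintro ⟨-, rfl⟩
  obtain ⟨a, -, ha⟩ := Finset.mem_image.1 hS
  exact (f a).2.ne ha

theorem mul_exteriorGen_apply_range {p : K} (hp : p ≠ 0) {k : ℕ}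
    {Z : Module.End Rᵐᵒᵖ (Finset ℕ → R)}
    (hZ : exteriorGen p k * Z = p ^ k • (Z * exteriorGen p k)) (F : Finset ℕ → R) :
    Z (exteriorGen p k F) (Finset.range (k + 1)) = Z F (Finset.range k) := by
  have hrange : (Finset.range (k + 1)).erase k = Finset.range k := by
    rw [Finset.range_add_one, Finset.erase_insert Finset.notMem_range_self]
  have hbelow : (Finset.range (k + 1)).filter (· < k) = Finset.range k := by
    ext s; simp; omega
  have happly := congrFun (LinearMap.congr_fun hZ F) (Finset.range (k + 1))
  rw [Module.End.mul_apply, exteriorGen_apply, if_pos (Finset.self_mem_range_succ k), hrange,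
    hbelow, Finset.card_range] at happly
  exact (smul_right_injective R (pow_ne_zero k hp) happly).symm

/-- The terms `ξ_b ξ_d` and `ξ_d ξ_b` of the anticommutator cancel in pairs. -/
theorem rowOperator_mul_rowOperator_eq_smul (q : Kˣ) {k : ℕ} (u v : Fin k → R)
    (hcomm : ∀ b d, b < d → u b * v d = v d * u b)
    (hserp : ∀ b d, b < d →
      v b * u d = u d * v b + ((q : K) - (q : K)⁻¹) • (v d * u b)) :
    rowOperator (-(q : K)) u * rowOperator (-(q : K)) v =
      -(q : K) • (rowOperator (-(q : K)) v * rowOperator (-(q : K)) u) := by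
  rw [← sub_eq_zero, rowOperator_mul_rowOperator, rowOperator_mul_rowOperator, Finset.smul_sum,
    ← Finset.sum_sub_distrib]
  let ξ (b : Fin k) : Module.End Rᵐᵒᵖ (Finset ℕ → R) := exteriorGen (-(q : K)) b
  let term (z : Fin k × Fin k) : Module.End Rᵐᵒᵖ (Finset ℕ → R) :=
    coeffMul K (u z.1 * v z.2) * (ξ z.1 * ξ z.2) -
      -(q : K) • (coeffMul K (v z.1 * u z.2) * (ξ z.1 * ξ z.2))
  have hpair (b d : Fin k) (hbd : b < d) : term (b, d) + term (d, b) = 0 := by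
    simp only [term, ξ]
    rw [exteriorGen_mul_exteriorGen _ hbd, hcomm b d hbd, hserp b d hbd, map_add, map_smul]
    simp only [mul_smul_comm, add_mul, smul_mul_assoc, smul_add, smul_smul]
    have hq := q.ne_zero
    match_scalars
    · field_simp; ring
    · ring
  have hdiag (b : Fin k) : term (b, b) = 0 := by simp [term, ξ, exteriorGen_mul_self]
  refine Finset.sum_involution (g := fun z _ => z.swap) (f := term) ?_ ?_ (by simp) (by simp)
  · rintro ⟨b, d⟩ -
    rcases lt_trichotomy b d with hbd | rfl | hbd
    · exact hpair b d hbd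
    · simp [hdiag]
    · rw [add_comm]; exact hpair d b hbd
  · rintro ⟨b, d⟩ - hne hswap
    obtain rfl : d = b := congrArg Prod.fst hswap
    exact hne (hdiag d)

theorem coeffMul_mul_rowOperator (p : K) {k : ℕ} {a : K} {x l : R} {u w : Fin k → R}
    (hcomm : ∀ b, x * u b = u b * x - a • (l * w b)) :
    coeffMul K x * rowOperator p u =
      rowOperator p u * coeffMul K x - a • (coeffMul K l * rowOperator p w) := by
  rw [rowOperator, rowOperator, Finset.mul_sum, Finset.sum_mul, Finset.mul_sum, Finset.smul_sum,
    ← Finset.sum_sub_distrib]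
  refine Finset.sum_congr rfl fun b _ => ?_
  rw [mul_assoc, exteriorGen_mul_coeffMul, ← mul_assoc, ← mul_assoc, ← mul_assoc, ← map_mul,
    ← map_mul, ← map_mul, hcomm, map_sub, map_smul, sub_mul, smul_mul_assoc]

theorem coeffMul_single (t : R) :
    coeffMul K t (Pi.single ∅ 1) = MulOpposite.op t • (Pi.single ∅ 1 : Finset ℕ → R) := by
  ext S
  rw [coeffMul_apply, Pi.smul_apply, op_smul_eq_mul]
  rcases eq_or_ne S ∅ with rfl | hS <;> simp [*]

theorem prod_rowOperator_succ {q : Kˣ} (hq : (q : K) - (q : K)⁻¹ ≠ 0) {k : ℕ}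
    {U : Fin (k + 1) → Fin (k + 1) → R}
    (hcomm : ∀ a : Fin k, ∀ b d, b < d →
      U (Fin.last k) b * U a.castSucc d = U a.castSucc d * U (Fin.last k) b)
    (hserp : ∀ a : Fin k, ∀ b d, b < d → U a.castSucc b * U (Fin.last k) d =
      U (Fin.last k) d * U a.castSucc b +
        ((q : K) - (q : K)⁻¹) • (U a.castSucc d * U (Fin.last k) b))
    {W : Fin (k + 1) → Module.End Rᵐᵒᵖ (Finset ℕ → R)}
    (hW : ∀ a, W a = rowOperator (-(q : K)) fun b : Fin k => U a b.castSucc)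
    {P T : Module.End Rᵐᵒᵖ (Finset ℕ → R)}
    (hP : P = ((List.finRange k).map fun a => W a.castSucc).prod)
    (hT : T = coeffMul K (U (Fin.last k) (Fin.last k))) :
    ((List.finRange (k + 1)).map fun a => rowOperator (-(q : K)) (U a)).prod =
      ((List.finRange (k + 1)).map W).prod +
        (P * T - (-(q : K) * ((q : K) - (q : K)⁻¹)⁻¹) • (T * P - P * T)) *
          exteriorGen (-(q : K)) k := by
  have hTW (a : Fin k) : T * W a.castSucc = W a.castSucc * T -
      ((q : K) - (q : K)⁻¹) • (coeffMul K (U a.castSucc (Fin.last k)) * W (Fin.last k)) := by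
    rw [hT, hW, hW]
    refine coeffMul_mul_rowOperator _ fun b => ?_
    rw [hserp a _ _ (Fin.castSucc_lt_last b), add_sub_cancel_right]
  have hWW (a : Fin k) :
      W (Fin.last k) * W a.castSucc = -(q : K) • (W a.castSucc * W (Fin.last k)) := by
    rw [hW, hW]
    exact rowOperator_mul_rowOperator_eq_smul q _ _
      (fun b d hbd => hcomm a _ _ (Fin.castSucc_lt_castSucc_iff.2 hbd))
      fun b d hbd => hserp a _ _ (Fin.castSucc_lt_castSucc_iff.2 hbd)
  have hXW (a) : exteriorGen (-(q : K)) k * W a = -(q : K) • (W a * exteriorGen (-(q : K)) k) := by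
    rw [hW, exteriorGen_mul_rowOperator]
  have hXT : exteriorGen (-(q : K)) k * T = T * exteriorGen (-(q : K)) k := by
    rw [hT, exteriorGen_mul_coeffMul]
  simp only [List.finRange_succ_last, List.map_append, List.map_map, List.prod_append,
    List.map_singleton, List.prod_singleton, Function.comp_def, rowOperator_succ, ← hW, ← hT]
  rw [hP]
  exact prod_map_add_mul_add (W := fun a : Fin k => W a.castSucc)
    (L := fun a : Fin k => coeffMul K (U a.castSucc (Fin.last k))) hq (exteriorGen_mul_self _ k)
    (fun a _ => hXW _) (fun a _ => exteriorGen_mul_coeffMul _ k _) (fun a _ => hTW a)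
    (fun a _ => hWW a) (hXW _) hXT

/-- Obtained by comparing the coefficients of `ξ_0 ⋯ ξ_k` in the product of the row operators. -/
theorem quantumDet_succ {q : Kˣ} (hq : (q : K) - (q : K)⁻¹ ≠ 0) {k : ℕ}
    {U : Fin (k + 1) → Fin (k + 1) → R}
    (hcomm : ∀ a : Fin k, ∀ b d, b < d →
      U (Fin.last k) b * U a.castSucc d = U a.castSucc d * U (Fin.last k) b)
    (hserp : ∀ a : Fin k, ∀ b d, b < d → U a.castSucc b * U (Fin.last k) d =
      U (Fin.last k) d * U a.castSucc b +
        ((q : K) - (q : K)⁻¹) • (U a.castSucc d * U (Fin.last k) b))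
    {D' t : R} (hD' : D' = quantumDet (-(q : K)) fun a b : Fin k => U a.castSucc b.castSucc)
    (ht : t = U (Fin.last k) (Fin.last k)) :
    quantumDet (-(q : K)) U =
      D' * t + ((q : K) * ((q : K) - (q : K)⁻¹)⁻¹) • (t * D' - D' * t) := by
  let W (a : Fin (k + 1)) : Module.End Rᵐᵒᵖ (Finset ℕ → R) :=
    rowOperator (-(q : K)) fun b : Fin k => U a b.castSucc
  set P := ((List.finRange k).map fun a => W a.castSucc).prod with hP
  have hXP : exteriorGen (-(q : K)) k * P = (-(q : K)) ^ k • (P * exteriorGen (-(q : K)) k) := by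
    have hXW (a : Fin k) : exteriorGen (-(q : K)) k * W a.castSucc =
        -(q : K) • (W a.castSucc * exteriorGen (-(q : K)) k) := exteriorGen_mul_rowOperator _ _
    rw [hP, mul_prod_map_eq_smul (c := -(q : K)) fun a _ => hXW a, List.length_finRange]
  have hXZ := mul_sub_smul_commutator (-(q : K) * ((q : K) - (q : K)⁻¹)⁻¹) hXP
    (exteriorGen_mul_coeffMul _ k t)
  have hPe : P (Pi.single ∅ 1) (Finset.range k) = D' := by
    rw [hD', ← prod_rowOperator_apply_range]
  have hPt : P (coeffMul K t (Pi.single ∅ 1)) (Finset.range k) = D' * t := by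
    rw [coeffMul_single, map_smul, Pi.smul_apply, hPe, op_smul_eq_mul]
  have hW_last : ((List.finRange (k + 1)).map W).prod (Pi.single ∅ 1) (Finset.range (k + 1)) = 0 :=
    prod_rowOperator_apply_eq_zero _ (fun a (b : Fin k) => U a b.castSucc) (by simp)
  rw [← prod_rowOperator_apply_range,
    prod_rowOperator_succ hq hcomm hserp (fun _ => rfl) hP (congrArg (coeffMul K) ht),
    LinearMap.add_apply, Pi.add_apply, hW_last, zero_add, Module.End.mul_apply,
    mul_exteriorGen_apply_range (neg_ne_zero.2 q.ne_zero) hXZ, LinearMap.sub_apply,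
    LinearMap.smul_apply, LinearMap.sub_apply, Module.End.mul_apply, Module.End.mul_apply,
    Pi.sub_apply, Pi.smul_apply, Pi.sub_apply, hPt, coeffMul_apply, hPe, neg_mul,
    neg_smul, sub_neg_eq_add]

end QuantumDeterminant

section Minors

variable {K : Type u} [Field K]

section QuantumDet

variable {R S : Type*} [Ring R] [Algebra K R] [Ring S] [Algebra K S] {k : ℕ}

theorem map_quantumDet (φ : R →ₐ[K] S) (p : K) (U : Fin k → Fin k → R) :
    φ (quantumDet p U) = quantumDet p fun a b => φ (U a b) := by
  simp [quantumDet, map_list_prod, Function.comp_def]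

theorem invCount_one : invCount (1 : Equiv.Perm (Fin k)) = 0 := by
  rw [invCount, Finset.card_eq_zero, Finset.filter_eq_empty_iff]
  rintro ⟨a, b⟩ - ⟨hab, hba⟩
  exact lt_asymm hab hba

theorem quantumDet_of_diagonal (p : K) {U : Fin k → Fin k → R} (hU : ∀ a b, a ≠ b → U a b = 0) :
    quantumDet p U = ((List.finRange k).map fun a => U a a).prod := by
  rw [quantumDet, Finset.sum_eq_single 1 (fun σ _ hσ => ?_) (by simp), invCount_one, pow_zero,
    one_smul]
  · rfl
  · obtain ⟨a, ha⟩ : ∃ a, σ a ≠ a := not_forall.1 fun h => hσ (Equiv.ext h)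
    have hprod : ((List.finRange k).map fun a => U a (σ a)).prod = 0 :=
      List.prod_eq_zero (List.mem_map.2 ⟨a, List.mem_finRange a, hU a (σ a) ha.symm⟩)
    rw [hprod, smul_zero]

end QuantumDet

variable {q : Kˣ} {m n : ℕ}

theorem tGen_mul_tGen_of_row_lt {i k : Fin m} (j : Fin n) (hik : i < k) :
    tGen K q m n i j * tGen K q m n k j = (q : K) • (tGen K q m n k j * tGen K q m n i j) := by
  have hrel := RingQuot.mkAlgHom_rel K (qMatRel.col (K := K) (q := q) i k j hik)
  simp only [map_mul, map_smul] at hrel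
  exact hrel

theorem tGen_mul_tGen_of_col_lt (i : Fin m) {j l : Fin n} (hjl : j < l) :
    tGen K q m n i j * tGen K q m n i l = (q : K) • (tGen K q m n i l * tGen K q m n i j) := by
  have hrel := RingQuot.mkAlgHom_rel K (qMatRel.row (K := K) (q := q) i j l hjl)
  simp only [map_mul, map_smul] at hrel
  exact hrel

theorem tGen_mul_tGen_comm {i k : Fin m} {j l : Fin n} (hik : i < k) (hlj : l < j) :
    tGen K q m n i j * tGen K q m n k l = tGen K q m n k l * tGen K q m n i j := by
  have hrel := RingQuot.mkAlgHom_rel K (qMatRel.comm (K := K) (q := q) i k j l hik hlj)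
  simp only [map_mul] at hrel
  exact hrel

theorem tGen_mul_tGen_of_lt_of_lt {i k : Fin m} {j l : Fin n} (hik : i < k) (hjl : j < l) :
    tGen K q m n i j * tGen K q m n k l = tGen K q m n k l * tGen K q m n i j +
      ((q : K) - (q : K)⁻¹) • (tGen K q m n i l * tGen K q m n k j) := by
  have hrel := RingQuot.mkAlgHom_rel K (qMatRel.serp (K := K) (q := q) i k j l hik hjl)
  simp only [map_mul, map_smul, map_add] at hrel
  exact hrel

theorem qMinor_eq_quantumDet {k : ℕ} (I : Fin k → Fin m) (J : Fin k → Fin n) :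
    qMinor K q m n k I J = quantumDet (-(q : K)) fun a b => tGen K q m n (I a) (J b) := rfl

theorem qMinor_succ (hq : (q : K) - (q : K)⁻¹ ≠ 0) {k : ℕ} {I : Fin (k + 1) → Fin m}
    {J : Fin (k + 1) → Fin n} (hI : StrictMono I) (hJ : StrictMono J) {D' t : RqMat K q m n}
    (hD' : D' = qMinor K q m n k (I ∘ Fin.castSucc) (J ∘ Fin.castSucc))
    (ht : t = tGen K q m n (I (Fin.last k)) (J (Fin.last k))) :
    qMinor K q m n (k + 1) I J =
      D' * t + ((q : K) * ((q : K) - (q : K)⁻¹)⁻¹) • (t * D' - D' * t) :=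
  quantumDet_succ (U := fun a b => tGen K q m n (I a) (J b)) hq
    (fun a _ _ hbd => (tGen_mul_tGen_comm (hI (Fin.castSucc_lt_last a)) (hJ hbd)).symm)
    (fun a _ _ hbd => tGen_mul_tGen_of_lt_of_lt (hI (Fin.castSucc_lt_last a)) (hJ hbd)) hD' ht

/-- The subtraction-free description of the index functions of a solid minor. -/
theorem solidMinor_eq_qMinor {i : Fin m} {j : Fin n} {k : ℕ} (hk : min (i : ℕ) (j : ℕ) + 1 = k)
    {I : Fin k → Fin m} {J : Fin k → Fin n} (hI : ∀ a, (I a : ℕ) + (k - 1) = i + a)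
    (hJ : ∀ a, (J a : ℕ) + (k - 1) = j + a) :
    solidMinor K q m n i j = qMinor K q m n k I J := by
  subst hk
  unfold solidMinor
  congr 1
  · ext a
    have := hI a
    dsimp only
    omega
  · ext a
    have := hJ a
    dsimp only
    omega

theorem solidMinor_of_eq_zero_or {i : Fin m} {j : Fin n} (hij : (i : ℕ) = 0 ∨ (j : ℕ) = 0) :
    solidMinor K q m n i j = tGen K q m n i j := by
  rw [solidMinor_eq_qMinor (k := 1) (I := fun _ => i) (J := fun _ => j) (by omega) (by simp)
    (by simp), qMinor_eq_quantumDet,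
    quantumDet_of_diagonal _ fun a b hab => absurd (Subsingleton.elim a b) hab]
  simp

theorem solidMinor_succ (hq : (q : K) - (q : K)⁻¹ ≠ 0) {i i' : Fin m} {j j' : Fin n}
    (hi : (i : ℕ) = i' + 1) (hj : (j : ℕ) = j' + 1) :
    solidMinor K q m n i j = solidMinor K q m n i' j' * tGen K q m n i j +
      ((q : K) * ((q : K) - (q : K)⁻¹)⁻¹) • (tGen K q m n i j * solidMinor K q m n i' j' -
        solidMinor K q m n i' j' * tGen K q m n i j) := by
  set k := min (i' : ℕ) (j' : ℕ) + 1 with hk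
  let I (a : Fin (k + 1)) : Fin m := ⟨i + a - k, by omega⟩
  let J (a : Fin (k + 1)) : Fin n := ⟨j + a - k, by omega⟩
  have hI : StrictMono I := fun a b hab => by
    rw [Fin.lt_def] at hab ⊢
    dsimp only [I]
    omega
  have hJ : StrictMono J := fun a b hab => by
    rw [Fin.lt_def] at hab ⊢
    dsimp only [J]
    omega
  have hI_last : I (Fin.last k) = i := Fin.ext (by simp [I])
  have hJ_last : J (Fin.last k) = j := Fin.ext (by simp [J])
  have hsolid : solidMinor K q m n i j = qMinor K q m n (k + 1) I J :=
    solidMinor_eq_qMinor (by omega) (fun a => by dsimp only [I]; omega)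
      fun a => by dsimp only [J]; omega
  rw [hsolid]
  refine qMinor_succ hq hI hJ (solidMinor_eq_qMinor hk.symm (fun a => ?_) fun a => ?_)
    (by rw [hI_last, hJ_last])
  · dsimp only [Function.comp, I, Fin.val_castSucc]
    omega
  · dsimp only [Function.comp, J, Fin.val_castSucc]
    omega

end Minors

section CornerRep

variable {K : Type u} [Field K]

/-- The lowering operator of the `q`-oscillator, acting on sequences. -/
def oscLower (q : Kˣ) : Module.End K (ℕ → K) where
  toFun f s := (q : K)⁻¹ * ((q : K) ^ (2 * (s + 1)) - 1) * f (s + 1)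
  map_add' f g := by ext s; simp [mul_add]
  map_smul' c f := by ext s; simp; ring

/-- The number operator `q ^ s` of the `q`-oscillator, acting on sequences. -/
def oscScale (q : Kˣ) : Module.End K (ℕ → K) where
  toFun f s := (q : K) ^ s * f s
  map_add' f g := by ext s; simp [mul_add]
  map_smul' c f := by ext s; simp; ring

variable (K) in
/-- The raising operator of the `q`-oscillator, acting on sequences. -/
def oscRaise : Module.End K (ℕ → K) where
  toFun f s := if s = 0 then 0 else f (s - 1)
  map_add' f g := by ext s; by_cases h : s = 0 <;> simp [h]
  map_smul' c f := by ext s; by_cases h : s = 0 <;> simp [h]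

theorem oscLower_apply (q : Kˣ) (f : ℕ → K) (s : ℕ) :
    oscLower q f s = (q : K)⁻¹ * ((q : K) ^ (2 * (s + 1)) - 1) * f (s + 1) := rfl

theorem oscScale_apply (q : Kˣ) (f : ℕ → K) (s : ℕ) : oscScale q f s = (q : K) ^ s * f s := rfl

theorem oscRaise_apply_zero (f : ℕ → K) : oscRaise K f 0 = 0 := rfl

theorem oscRaise_apply_succ (f : ℕ → K) (s : ℕ) : oscRaise K f (s + 1) = f s := rfl

theorem oscLower_mul_oscScale (q : Kˣ) :
    oscLower q * oscScale q = (q : K) • (oscScale q * oscLower q) := by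
  refine LinearMap.ext fun f => funext fun s => ?_
  simp only [Module.End.mul_apply, LinearMap.smul_apply, Pi.smul_apply, smul_eq_mul,
    oscLower_apply, oscScale_apply]
  ring

theorem oscScale_mul_oscRaise (q : Kˣ) :
    oscScale q * oscRaise K = (q : K) • (oscRaise K * oscScale q) := by
  refine LinearMap.ext fun f => funext fun s => ?_
  simp only [Module.End.mul_apply, LinearMap.smul_apply, Pi.smul_apply, smul_eq_mul]
  cases s with
  | zero => simp only [oscScale_apply, oscRaise_apply_zero, mul_zero]
  | succ s => simp only [oscScale_apply, oscRaise_apply_succ]; ring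

theorem oscLower_mul_oscRaise (q : Kˣ) :
    oscLower q * oscRaise K =
      oscRaise K * oscLower q + ((q : K) - (q : K)⁻¹) • (oscScale q * oscScale q) := by
  refine LinearMap.ext fun f => funext fun s => ?_
  have hq := q.ne_zero
  simp only [Module.End.mul_apply, LinearMap.smul_apply, LinearMap.add_apply, Pi.add_apply,
    Pi.smul_apply, smul_eq_mul]
  cases s with
  | zero =>
    simp only [oscLower_apply, oscScale_apply, oscRaise_apply_zero, oscRaise_apply_succ]
    field_simp
    ring
  | succ s =>
    simp only [oscLower_apply, oscScale_apply, oscRaise_apply_succ]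
    field_simp
    ring

/-- Evaluate at `s = 0` and `s = 1` on the constant sequence `1`. -/
theorem oscRaise_mul_oscLower_ne_smul {q : Kˣ} (hq : (q : K) ^ 2 ≠ 1) (c : K) :
    oscRaise K * oscLower q ≠ c • (oscLower q * oscRaise K) := by
  intro h
  have hq' : (q : K)⁻¹ * ((q : K) ^ 2 - 1) ≠ 0 :=
    mul_ne_zero (inv_ne_zero q.ne_zero) (sub_ne_zero.2 hq)
  have h_zero := congrFun (LinearMap.congr_fun h 1) 0
  have h_one := congrFun (LinearMap.congr_fun h 1) 1
  simp only [Module.End.mul_apply, LinearMap.smul_apply, Pi.smul_apply, smul_eq_mul,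
    oscRaise_apply_zero, oscRaise_apply_succ, oscLower_apply, Pi.one_apply, mul_one] at h_zero h_one
  have hc : c = 0 := (mul_eq_zero.1 h_zero.symm).resolve_right hq'
  rw [hc, zero_mul] at h_one
  exact hq' h_one

/-- The images of the generators `t_{ab}` under the representation attached to the corner
`(i₀, j₀)`: the `2 × 2` block with upper left entry `t_{i₀ j₀}` acts by the `q`-oscillator, the
entries before it on the same diagonal act by `1`, and all others by `0`. -/
def cornerRepGen (q : Kˣ) (i₀ j₀ : ℕ) (a b : ℕ) : Module.End K (ℕ → K) :=
  if a = i₀ ∧ b = j₀ then oscLower q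
  else if (a = i₀ ∧ b = j₀ + 1) ∨ (a = i₀ + 1 ∧ b = j₀) then oscScale q
  else if a = i₀ + 1 ∧ b = j₀ + 1 then oscRaise K
  else if a < i₀ ∧ b < j₀ ∧ i₀ + b = j₀ + a then 1 else 0

theorem cornerRepGen_mul_of_row_lt (q : Kˣ) (i₀ j₀ : ℕ) {i k : ℕ} (j : ℕ) (hik : i < k) :
    cornerRepGen q i₀ j₀ i j * cornerRepGen q i₀ j₀ k j =
      (q : K) • (cornerRepGen q i₀ j₀ k j * cornerRepGen q i₀ j₀ i j) := by
  have := oscLower_mul_oscScale q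
  have := oscScale_mul_oscRaise q
  unfold cornerRepGen
  split_ifs <;> first | (exfalso; omega) | simp [*]

theorem cornerRepGen_mul_of_col_lt (q : Kˣ) (i₀ j₀ : ℕ) {j l : ℕ} (i : ℕ) (hjl : j < l) :
    cornerRepGen q i₀ j₀ i j * cornerRepGen q i₀ j₀ i l =
      (q : K) • (cornerRepGen q i₀ j₀ i l * cornerRepGen q i₀ j₀ i j) := by
  have := oscLower_mul_oscScale q
  have := oscScale_mul_oscRaise q
  unfold cornerRepGen
  split_ifs <;> first | (exfalso; omega) | simp [*]

theorem cornerRepGen_mul_comm (q : Kˣ) (i₀ j₀ : ℕ) {i k j l : ℕ} (hik : i < k) (hlj : l < j) :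
    cornerRepGen q i₀ j₀ i j * cornerRepGen q i₀ j₀ k l =
      cornerRepGen q i₀ j₀ k l * cornerRepGen q i₀ j₀ i j := by
  unfold cornerRepGen
  split_ifs <;> first | (exfalso; omega) | simp

theorem cornerRepGen_mul_of_lt_of_lt (q : Kˣ) (i₀ j₀ : ℕ) {i k j l : ℕ} (hik : i < k)
    (hjl : j < l) :
    cornerRepGen q i₀ j₀ i j * cornerRepGen q i₀ j₀ k l =
      cornerRepGen q i₀ j₀ k l * cornerRepGen q i₀ j₀ i j +
        ((q : K) - (q : K)⁻¹) • (cornerRepGen q i₀ j₀ i l * cornerRepGen q i₀ j₀ k j) := by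
  by_cases hcorner : i = i₀ ∧ k = i₀ + 1 ∧ j = j₀ ∧ l = j₀ + 1
  · obtain ⟨rfl, rfl, rfl, rfl⟩ := hcorner
    simpa [cornerRepGen] using oscLower_mul_oscRaise q
  · have hanti : cornerRepGen q i₀ j₀ i l * cornerRepGen q i₀ j₀ k j = 0 := by
      unfold cornerRepGen
      split_ifs <;> first | (exfalso; omega) | simp
    have hdiag : cornerRepGen q i₀ j₀ i j * cornerRepGen q i₀ j₀ k l =
        cornerRepGen q i₀ j₀ k l * cornerRepGen q i₀ j₀ i j := by
      unfold cornerRepGen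
      split_ifs <;> first | (exfalso; omega) | simp
    rw [hanti, hdiag, smul_zero, add_zero]

/-- The representation of quantum matrices on sequences that is attached to the corner
`(i₀, j₀)`. -/
def cornerRep (q : Kˣ) (m n i₀ j₀ : ℕ) : RqMat K q m n →ₐ[K] Module.End K (ℕ → K) :=
  RingQuot.liftAlgHom K
    ⟨FreeAlgebra.lift K fun z : Fin m × Fin n => cornerRepGen q i₀ j₀ z.1 z.2, by
      rintro x y (⟨i, k, j, hik⟩ | ⟨i, j, l, hjl⟩ | ⟨i, k, j, l, hik, hlj⟩ | ⟨i, k, j, l, hik, hjl⟩)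
      · simpa using cornerRepGen_mul_of_row_lt q i₀ j₀ j hik
      · simpa using cornerRepGen_mul_of_col_lt q i₀ j₀ i hjl
      · simpa using cornerRepGen_mul_comm q i₀ j₀ hik hlj
      · simpa using cornerRepGen_mul_of_lt_of_lt q i₀ j₀ hik hjl⟩

theorem cornerRep_tGen (q : Kˣ) {m n : ℕ} (i₀ j₀ : ℕ) (i : Fin m) (j : Fin n) :
    cornerRep q m n i₀ j₀ (tGen K q m n i j) = cornerRepGen q i₀ j₀ i j :=
  (RingQuot.liftAlgHom_mkAlgHom_apply ..).trans (FreeAlgebra.lift_ι_apply _ _)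

theorem cornerRep_solidMinor (q : Kˣ) {m n : ℕ} (i : Fin m) (j : Fin n) :
    cornerRep q m n i j (solidMinor K q m n i j) = oscLower q := by
  have hones (a : Fin (min (i : ℕ) j)) :
      cornerRepGen (K := K) q i j (i - min (i : ℕ) j + a) (j - min (i : ℕ) j + a) = 1 := by
    unfold cornerRepGen
    split_ifs <;> first | (exfalso; omega) | rfl
  rw [solidMinor, qMinor_eq_quantumDet, map_quantumDet, quantumDet_of_diagonal]
  · simp only [cornerRep_tGen, List.finRange_succ_last, List.map_append, List.map_map,
      List.prod_append, Function.comp_def, Fin.val_castSucc, hones]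
    simp [cornerRepGen]
  · intro a b hab
    rw [Ne, Fin.ext_iff] at hab
    simp only [cornerRep_tGen, cornerRepGen]
    split_ifs <;> first | (exfalso; omega) | rfl

theorem tGen_mul_solidMinor_ne_smul {q : Kˣ} (hq : (q : K) ^ 2 ≠ 1) {m n : ℕ} {i i' : Fin m}
    {j j' : Fin n} (hi : (i : ℕ) = i' + 1) (hj : (j : ℕ) = j' + 1) (c : K) :
    tGen K q m n i j * solidMinor K q m n i' j' ≠
      c • (solidMinor K q m n i' j' * tGen K q m n i j) := by
  intro h
  have hraise : cornerRep q m n i' j' (tGen K q m n i j) = oscRaise K := by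
    rw [cornerRep_tGen, hi, hj]
    simp [cornerRepGen]
  have hrep := congrArg (cornerRep q m n i' j') h
  rw [map_mul, map_smul, map_mul, cornerRep_solidMinor, hraise] at hrep
  exact oscRaise_mul_oscLower_ne_smul hq c hrep

end CornerRep

section Weights

theorem sum_snd_eq_of_prod_pow_eq {ι κ M : Type*} [Fintype ι] [Fintype κ] [DecidableEq ι]
    [CommMonoid M] {g : M} (hg : Function.Injective fun s : ℕ => g ^ s) {f : ι × κ → ℕ} {i : ι}
    {j : κ} (h : ∀ (u : ι → M) (w : κ → M), ∏ z, (u z.1 * w z.2) ^ f z = u i * w j) (a : ι) :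
    ∑ b, f (a, b) = if a = i then 1 else 0 := by
  apply hg
  have hprod := h (Pi.mulSingle a g) 1
  rw [Fintype.prod_prod_type, Fintype.prod_eq_single a fun a' ha' => by simp [ha']] at hprod
  simp only [Pi.mulSingle_eq_same, Pi.one_apply, mul_one, Finset.prod_pow_eq_pow_sum] at hprod
  dsimp only
  rw [hprod]
  split_ifs with ha
  · simp [ha]
  · simp [Ne.symm ha]

/-- Testing against the coordinate vectors determines the row and column sums of `f`. -/
theorem eq_single_of_prod_pow_eq {ι κ M : Type*} [Fintype ι] [Fintype κ] [DecidableEq ι]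
    [DecidableEq κ] [CommMonoid M] {g : M} (hg : Function.Injective fun s : ℕ => g ^ s)
    {f : ι × κ → ℕ} {i : ι} {j : κ}
    (h : ∀ (u : ι → M) (w : κ → M), ∏ z, (u z.1 * w z.2) ^ f z = u i * w j) :
    f = Pi.single (i, j) 1 := by
  have hrow := sum_snd_eq_of_prod_pow_eq hg h
  have hcol (b : κ) : ∑ a, f (a, b) = if b = j then 1 else 0 := by
    refine sum_snd_eq_of_prod_pow_eq (f := f ∘ Prod.swap) (j := i) hg (fun w u => ?_) b
    rw [← (Equiv.prodComm ι κ).prod_comp, mul_comm, ← h u w]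
    exact Finset.prod_congr rfl fun z _ => by rw [mul_comm]; rfl
  have hzero {a : ι} {b : κ} (hab : (a, b) ≠ (i, j)) : f (a, b) = 0 := by
    by_cases ha : a = i
    · have hb : b ≠ j := fun hb => hab (by rw [ha, hb])
      exact Finset.sum_eq_zero_iff.1 ((hcol b).trans (if_neg hb)) a (Finset.mem_univ a)
    · exact Finset.sum_eq_zero_iff.1 ((hrow a).trans (if_neg ha)) b (Finset.mem_univ b)
  ext ⟨a, b⟩
  by_cases hab : (a, b) = (i, j)
  · have hsum := hrow i
    rw [Fintype.sum_eq_single j fun b hb => hzero (by simpa using hb), if_pos rfl] at hsum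
    rw [hab, hsum, Pi.single_eq_same]
  · rw [hzero hab, Pi.single_eq_of_ne hab]

theorem ordMonomial_single {R : Type*} [Ring R] {N : ℕ} (x : Fin N → R) (k : Fin N) :
    ordMonomial x (Pi.single k 1) = x k := by
  have hupdate := ordMonomial_mul_pow x (k := k) (f := 0) (fun _ _ => rfl) 1
  rw [pow_one] at hupdate
  rw [Pi.single, ← hupdate]
  simp [ordMonomial]

theorem injective_pow_of_forall_pow_ne_one {K : Type*} [Field K] {q : Kˣ}
    (hq : ∀ s : ℕ, s ≠ 0 → (q : K) ^ s ≠ 1) : Function.Injective fun s : ℕ => q ^ s := by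
  refine injective_pow_iff_not_isOfFinOrder.2 fun hfin => ?_
  obtain ⟨s, hs, hqs⟩ := isOfFinOrder_iff_pow_eq_one.1 hfin
  exact hq s hs.ne' (by rw [← Units.val_pow_eq_pow_val, hqs, Units.val_one])

end Weights

namespace QNA

variable {K : Type u} [Field K] {R : Type v} [Ring R] [Algebra K R] {N r : ℕ} (Q : QNA K R N r)

theorem gen_ne_zero (k : Fin N) : Q.x k ≠ 0 := by
  have := Q.nontrivial
  rw [← ordMonomial_single Q.x k]
  exact Q.pbw.ne_zero _

theorem eq_zero_of_mul_gen_mem {k : Fin N} {a : R} (ha : a ∈ Rsub K Q.x k)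
    (hak : a * Q.x k ∈ Rsub K Q.x k) : a = 0 :=
  ((Q.isOreExtension k).linear_unique ha (Subalgebra.zero_mem _) (Subalgebra.zero_mem _) hak
    (by rw [add_zero, zero_mul, zero_add])).1

theorem act_h_gen {l k : Fin N} (hlk : l < k) {ν : K}
    (hν : Q.x k * Q.x l - ν • (Q.x l * Q.x k) ∈ Rsub K Q.x k) :
    Q.act (Q.h k) (Q.x l) = ν • Q.x l := by
  have hl : Q.x l ∈ Rsub K Q.x k := gen_mem_Rsub Q.x hlk
  rw [← sub_eq_zero]
  refine Q.eq_zero_of_mul_gen_mem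
    (Subalgebra.sub_mem _ (Q.act_mem_Rsub _ hl) (Subalgebra.smul_mem _ hl _)) ?_
  convert Subalgebra.sub_mem _ hν (Q.stable k _ hl) using 1
  rw [skewDelta, sub_mul, smul_mul_assoc, sub_sub_sub_cancel_left]

theorem deltaZero_of_forall_gen {k : Fin N}
    (hk : ∀ l < k, ∃ ν : K, Q.x k * Q.x l = ν • (Q.x l * Q.x k)) : deltaZero K Q k := by
  intro a ha
  rw [skewDelta, sub_eq_zero]
  unfold Rsub at ha
  induction ha using Algebra.adjoin_induction with
  | mem z hz =>
    obtain ⟨l, hl, rfl⟩ := hz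
    obtain ⟨ν, hν⟩ := hk l hl
    rw [Q.act_h_gen hl (ν := ν) (by rw [hν, sub_self]; exact Subalgebra.zero_mem _), hν,
      smul_mul_assoc]
  | algebraMap s => rw [AlgEquiv.commutes]; exact (Algebra.commutes _ _).symm
  | add a b _ _ iha ihb => rw [mul_add, map_add, add_mul, iha, ihb]
  | mul a b _ _ iha ihb => rw [← mul_assoc, iha, mul_assoc, ihb, map_mul, mul_assoc]

end QNA

theorem finProdFinEquiv_lt_finProdFinEquiv {m n : ℕ} {i a : Fin m} {j b : Fin n} :
    (finProdFinEquiv (a, b) : Fin (m * n)) < finProdFinEquiv (i, j) ↔ a < i ∨ a = i ∧ b < j := by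
  rw [Fin.lt_def, Fin.lt_def, Fin.lt_def, Fin.ext_iff]
  simp only [finProdFinEquiv_apply_val]
  rcases lt_trichotomy (a : ℕ) i with hai | hai | hai
  · have : n * (a + 1) ≤ n * i := Nat.mul_le_mul_left n hai
    rw [Nat.mul_add_one] at this
    omega
  · rw [hai]
    omega
  · have : n * (i + 1) ≤ n * a := Nat.mul_le_mul_left n hai
    rw [Nat.mul_add_one] at this
    omega

/-- The quantum nilpotent algebra `Q` is the standard presentation of quantum matrices: its
generators are the `t_{ij}` in lexicographic order, and the torus acts by rescaling the rows and
the columns. -/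
structure IsQuantumMatrices {K : Type u} [Field K] {q : Kˣ} {m n : ℕ}
    (Q : QNA K (RqMat K q m n) (m * n) (m + n)) : Prop where
  x_eq : ∀ (i : Fin m) (j : Fin n), Q.x (finProdFinEquiv (i, j)) = tGen K q m n i j
  act_tGen : ∀ (ξ : Torus K (m + n)) (i : Fin m) (j : Fin n), Q.act ξ (tGen K q m n i j) =
    ((ξ (Fin.castAdd n i) * (ξ (Fin.natAdd m j))⁻¹ : Kˣ) : K) • tGen K q m n i j

namespace IsQuantumMatrices

variable {K : Type u} [Field K] {q : Kˣ} {m n : ℕ}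
  {Q : QNA K (RqMat K q m n) (m * n) (m + n)}

theorem eq_single_of_weight (hQ : IsQuantumMatrices Q) (hq : ∀ s : ℕ, s ≠ 0 → (q : K) ^ s ≠ 1)
    {i : Fin m} {j : Fin n} {c : (Fin (m * n) → ℕ) →₀ K}
    (hc : ∀ ξ : Torus K (m + n), Q.act ξ (Finsupp.linearCombination K (ordMonomial Q.x) c) =
      ((ξ (Fin.castAdd n i) * (ξ (Fin.natAdd m j))⁻¹ : Kˣ) : K) •
        Finsupp.linearCombination K (ordMonomial Q.x) c)
    {f : Fin (m * n) → ℕ} (hf : c f ≠ 0) : f = Pi.single (finProdFinEquiv (i, j)) 1 := by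
  have hsingle : f ∘ finProdFinEquiv = Pi.single (i, j) 1 := by
    refine eq_single_of_prod_pow_eq (injective_pow_of_forall_pow_ne_one hq) fun u w => ?_
    let ξ : Torus K (m + n) := Fin.append u w⁻¹
    have hχ (l : Fin (m * n)) : Q.act ξ (Q.x l) =
        ((u (finProdFinEquiv.symm l).1 * w (finProdFinEquiv.symm l).2 : Kˣ) : K) • Q.x l := by
      obtain ⟨⟨a, b⟩, rfl⟩ := finProdFinEquiv.surjective l
      rw [hQ.x_eq, hQ.act_tGen]
      simp [ξ]
    have hprod := prod_pow_eq_of_map_linearCombination Q.pbw (Q.act ξ) hχ (hc ξ) hf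
    rw [← finProdFinEquiv.prod_comp] at hprod
    ext
    simpa [ξ] using hprod
  ext l
  obtain ⟨z, rfl⟩ := finProdFinEquiv.surjective l
  simpa [Pi.single_apply] using congrFun hsingle z

theorem exists_eq_smul_tGen (hQ : IsQuantumMatrices Q) (hq : ∀ s : ℕ, s ≠ 0 → (q : K) ^ s ≠ 1)
    {i : Fin m} {j : Fin n} {b : RqMat K q m n} (hb : ∀ ξ : Torus K (m + n), Q.act ξ b =
      ((ξ (Fin.castAdd n i) * (ξ (Fin.natAdd m j))⁻¹ : Kˣ) : K) • b) :
    ∃ c : K, b = c • tGen K q m n i j := by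
  obtain ⟨c, rfl⟩ := Q.exists_linearCombination_ordMonomial b
  have hsupport : c = Finsupp.single (Pi.single (finProdFinEquiv (i, j)) 1)
      (c (Pi.single (finProdFinEquiv (i, j)) 1)) :=
    Finsupp.eq_single_iff.2
      ⟨fun f hf => Finset.mem_singleton.2
        (hQ.eq_single_of_weight hq hb (Finsupp.mem_support_iff.1 hf)), rfl⟩
  refine ⟨c (Pi.single (finProdFinEquiv (i, j)) 1), ?_⟩
  conv_lhs => rw [hsupport]
  rw [Finsupp.linearCombination_single, ordMonomial_single, hQ.x_eq]

theorem exists_tGen_mul_eq_smul (hQ : IsQuantumMatrices Q)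
    (hq : ∀ s : ℕ, s ≠ 0 → (q : K) ^ s ≠ 1) {i : Fin m} {j : Fin n} {y b : RqMat K q m n}
    (hy : y ≠ 0) {f : Fin (m + n) → ℤ} (hf : IsEigenWith K Q.act f y)
    (hb : tGen K q m n i j * y = y * b) :
    ∃ c : K, tGen K q m n i j * y = c • (y * tGen K q m n i j) := by
  have := Q.isDomain
  obtain ⟨c, rfl⟩ : ∃ c : K, b = c • tGen K q m n i j := by
    refine hQ.exists_eq_smul_tGen hq fun ξ => mul_left_cancel₀ hy ?_
    have hact := congrArg (Q.act ξ) hb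
    rw [map_mul, map_mul, hQ.act_tGen, hf ξ, smul_mul_assoc, mul_smul_comm, smul_mul_assoc, hb,
      smul_comm] at hact
    rw [mul_smul_comm]
    exact (smul_right_injective _ (Units.ne_zero (∏ i, ξ i ^ f i)) hact).symm
  exact ⟨c, by rw [hb, mul_smul_comm]⟩

theorem tGen_ne_zero (hQ : IsQuantumMatrices Q) (i : Fin m) (j : Fin n) :
    tGen K q m n i j ≠ 0 :=
  hQ.x_eq i j ▸ Q.gen_ne_zero _

theorem tGen_mem_Rsub (hQ : IsQuantumMatrices Q) {i a : Fin m} {j b : Fin n}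
    (hlt : a < i ∨ a = i ∧ b < j) :
    tGen K q m n a b ∈ Rsub K Q.x (finProdFinEquiv (i, j) : Fin (m * n)) :=
  hQ.x_eq a b ▸ gen_mem_Rsub Q.x (finProdFinEquiv_lt_finProdFinEquiv.2 hlt)

theorem act_h_tGen (hQ : IsQuantumMatrices Q) {i a : Fin m} {j b : Fin n}
    (hlt : a < i ∨ a = i ∧ b < j) {ν : K}
    (hν : tGen K q m n i j * tGen K q m n a b - ν • (tGen K q m n a b * tGen K q m n i j) ∈
      Rsub K Q.x (finProdFinEquiv (i, j) : Fin (m * n))) :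
    Q.act (Q.h (finProdFinEquiv (i, j))) (tGen K q m n a b) = ν • tGen K q m n a b := by
  rw [← hQ.x_eq]
  refine Q.act_h_gen (finProdFinEquiv_lt_finProdFinEquiv.2 hlt) ?_
  rwa [hQ.x_eq, hQ.x_eq]

theorem act_h_tGen_row (hQ : IsQuantumMatrices Q) (i : Fin m) {j b : Fin n} (hbj : b < j) :
    Q.act (Q.h (finProdFinEquiv (i, j))) (tGen K q m n i b) = (q : K)⁻¹ • tGen K q m n i b := by
  refine hQ.act_h_tGen (Or.inr ⟨rfl, hbj⟩) ?_
  rw [tGen_mul_tGen_of_col_lt i hbj, inv_smul_smul₀ q.ne_zero, sub_self]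
  exact Subalgebra.zero_mem _

theorem act_h_tGen_col (hQ : IsQuantumMatrices Q) {i a : Fin m} (j : Fin n) (hai : a < i) :
    Q.act (Q.h (finProdFinEquiv (i, j))) (tGen K q m n a j) = (q : K)⁻¹ • tGen K q m n a j := by
  refine hQ.act_h_tGen (Or.inl hai) ?_
  rw [tGen_mul_tGen_of_row_lt j hai, inv_smul_smul₀ q.ne_zero, sub_self]
  exact Subalgebra.zero_mem _

theorem act_h_tGen_of_lt_of_lt (hQ : IsQuantumMatrices Q) {i a : Fin m} {j b : Fin n}
    (hai : a < i) (hbj : b < j) :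
    Q.act (Q.h (finProdFinEquiv (i, j))) (tGen K q m n a b) = tGen K q m n a b := by
  refine (hQ.act_h_tGen (Or.inl hai) (ν := 1) ?_).trans (one_smul K _)
  rw [tGen_mul_tGen_of_lt_of_lt hai hbj, one_smul, sub_add_cancel_left]
  exact Subalgebra.neg_mem _ (Subalgebra.smul_mem _ (Subalgebra.mul_mem _
    (hQ.tGen_mem_Rsub (Or.inl hai)) (hQ.tGen_mem_Rsub (Or.inr ⟨rfl, hbj⟩))) _)

/-- The weights satisfy `χ_{ij} χ_{ab} = χ_{ib} χ_{aj}`, which determines the eigenvalue of `h_{ij}`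
on `t_{ij}` from those on the three other corners of the rectangle. -/
theorem act_h_tGen_self (hQ : IsQuantumMatrices Q) {i a : Fin m} {j b : Fin n}
    (hai : a < i) (hbj : b < j) :
    Q.act (Q.h (finProdFinEquiv (i, j))) (tGen K q m n i j) =
      ((q : K)⁻¹ * (q : K)⁻¹) • tGen K q m n i j := by
  set ξ := Q.h (finProdFinEquiv (i, j)) with hξ
  have hweight {i' : Fin m} {j' : Fin n} {ν : Kˣ}
      (hν : Q.act ξ (tGen K q m n i' j') = (ν : K) • tGen K q m n i' j') :
      ξ (Fin.castAdd n i') * (ξ (Fin.natAdd m j'))⁻¹ = ν := by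
    rw [hQ.act_tGen] at hν
    exact Units.ext (smul_left_injective K (hQ.tGen_ne_zero i' j') hν)
  have hrow := hweight (ν := q⁻¹) (by rw [Units.val_inv_eq_inv_val, hξ, hQ.act_h_tGen_row i hbj])
  have hcol := hweight (ν := q⁻¹) (by rw [Units.val_inv_eq_inv_val, hξ, hQ.act_h_tGen_col j hai])
  have hdiag := hweight (ν := 1) (by
    rw [Units.val_one, one_smul, hξ, hQ.act_h_tGen_of_lt_of_lt hai hbj])
  rw [hQ.act_tGen, ← Units.val_inv_eq_inv_val, ← Units.val_mul]
  congr 2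
  rw [mul_inv_eq_one] at hdiag
  rw [hdiag] at hcol
  nth_rewrite 1 [← hrow]
  rw [← hcol, mul_assoc, inv_mul_cancel_left]

theorem deltaZero_of_eq_zero_or (hQ : IsQuantumMatrices Q) {i : Fin m} {j : Fin n}
    (hij : (i : ℕ) = 0 ∨ (j : ℕ) = 0) : deltaZero K Q (finProdFinEquiv (i, j)) := by
  refine Q.deltaZero_of_forall_gen fun l hl => ?_
  obtain ⟨⟨a, b⟩, rfl⟩ := finProdFinEquiv.surjective l
  rw [hQ.x_eq, hQ.x_eq]
  rcases finProdFinEquiv_lt_finProdFinEquiv.1 hl with hai | ⟨rfl, hbj⟩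
  · rcases lt_trichotomy b j with hbj | rfl | hjb
    · rw [Fin.lt_def] at hai hbj
      omega
    · exact ⟨(q : K)⁻¹, by rw [tGen_mul_tGen_of_row_lt b hai, inv_smul_smul₀ q.ne_zero]⟩
    · exact ⟨1, by rw [tGen_mul_tGen_comm hai hjb, one_smul]⟩
  · exact ⟨(q : K)⁻¹, by rw [tGen_mul_tGen_of_col_lt a hbj, inv_smul_smul₀ q.ne_zero]⟩

theorem act_h_solidMinor (hQ : IsQuantumMatrices Q) {i a : Fin m} {j b : Fin n} (hai : a < i)
    (hbj : b < j) :
    Q.act (Q.h (finProdFinEquiv (i, j))) (solidMinor K q m n a b) = solidMinor K q m n a b := by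
  rw [solidMinor, qMinor_eq_quantumDet, ← AlgEquiv.coe_toAlgHom, map_quantumDet]
  congr 1
  ext c d
  refine hQ.act_h_tGen_of_lt_of_lt ?_ ?_ <;> rw [Fin.lt_def] at * <;> dsimp only <;> omega

end IsQuantumMatrices

section PredIdx

variable {N : ℕ} {α : Type*} [DecidableEq α] {η : Fin N → α} {k : Fin N}

theorem predIdx_eq_bot_iff : predIdx η k = ⊥ ↔ ∀ l < k, η l ≠ η k := by
  simp [predIdx, Finset.max_eq_bot, Finset.filter_eq_empty_iff]

theorem predIdx_eq_coe_iff {p : Fin N} :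
    predIdx η k = p ↔ p < k ∧ η p = η k ∧ ∀ l, p < l → l < k → η l ≠ η k := by
  constructor
  · intro hp
    have hmem := Finset.mem_of_max hp
    simp only [Finset.mem_filter, Finset.mem_univ, true_and] at hmem
    refine ⟨hmem.1, hmem.2, fun l hpl hlk hl => hpl.not_ge ?_⟩
    exact Finset.le_max_of_eq (Finset.mem_filter.2 ⟨Finset.mem_univ l, hlk, hl⟩) hp
  · rintro ⟨hpk, hp, hlast⟩
    refine le_antisymm (Finset.max_le fun l hl => WithBot.coe_le_coe.2 ?_)
      (Finset.le_max (by simp [hpk, hp]))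
    simp only [Finset.mem_filter, Finset.mem_univ, true_and] at hl
    by_contra! hpl
    exact hlast l hpl hl.1 hl.2

end PredIdx

section PrimeSeq

variable {K : Type u} [Field K] {R : Type v} [Ring R] [Algebra K R] {N r : ℕ}

theorem QNA.isPrimeIn_Rsub_succ_of_deltaZero (Q : QNA K R N r) {k : Fin N}
    (hk : deltaZero K Q k) {p : R} (hp : IsPrimeIn K (Rsub K Q.x k) p) {f : Fin r → ℤ}
    (hf : IsEigenWith K Q.act f p) : IsPrimeIn K (Rsub K Q.x ((k : ℕ) + 1)) p := by
  have := Q.noZeroDivisors_Rsub k.2.le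
  refine (Q.isOreExtension k).isPrimeIn_of_gen_mul hp (κ := ∏ i, Q.h k i ^ f i) ?_
  rw [sub_eq_zero.1 (hk p hp.1), hf, smul_mul_assoc]

namespace IsPrimeSeq

variable {Q : QNA K R N r} {η : Fin N → ℤ} {c y : Fin N → R}

theorem isPrimeIn_Rsub (hs : IsPrimeSeq K Q η c y) {p : Fin N} {k : ℕ} (hpk : (p : ℕ) < k)
    (hk : k ≤ N) (hlast : ∀ l : Fin N, p < l → (l : ℕ) < k → η l ≠ η p) :
    IsPrimeIn K (Rsub K Q.x k) (y p) := by
  obtain ⟨k, rfl⟩ := Nat.exists_eq_add_one_of_ne_zero (Nat.ne_zero_of_lt hpk)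
  exact ((hs.prime_iff ⟨k, hk⟩ (y p)).2 ⟨p, Nat.le_of_lt_succ hpk,
    fun l hpl hlk => hlast l hpl (Nat.lt_succ_of_le hlk), 1, (one_smul K _).symm⟩).1

theorem isPrimeIn_Rsub_succ (hs : IsPrimeSeq K Q η c y) (l : Fin N) :
    IsPrimeIn K (Rsub K Q.x ((l : ℕ) + 1)) (y l) :=
  hs.isPrimeIn_Rsub (Nat.lt_succ_self l) l.2
    fun _ hlk hkl => absurd (Nat.le_of_lt_succ hkl) hlk.not_ge

theorem y_ne_zero (hs : IsPrimeSeq K Q η c y) (l : Fin N) : y l ≠ 0 :=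
  (hs.isPrimeIn_Rsub_succ l).2.1

theorem y_mem_Rsub (hs : IsPrimeSeq K Q η c y) {l : Fin N} {k : ℕ} (hlk : (l : ℕ) < k) :
    y l ∈ Rsub K Q.x k :=
  Rsub_mono Q.x hlk (hs.isPrimeIn_Rsub_succ l).1

theorem y_notMem_Rsub (hs : IsPrimeSeq K Q η c y) (l : Fin N) : y l ∉ Rsub K Q.x l := by
  have := Q.nontrivial
  intro hmem
  by_cases hδ : deltaZero K Q l
  · rw [hs.rec_delta_zero l hδ] at hmem
    exact one_ne_zero (Q.eq_zero_of_mul_gen_mem (Subalgebra.one_mem _) (by rwa [one_mul]))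
  · have hleading {w : R} (hw : w ∈ Rsub K Q.x l) (hyw : y l = w * Q.x l - c l) : w = 0 :=
      Q.eq_zero_of_mul_gen_mem hw
        (eq_sub_iff_add_eq.1 hyw ▸ Subalgebra.add_mem _ hmem (hs.c_mem l hδ))
    have hrec := hs.rec_delta_ne l hδ
    cases hp : predIdx η l with
    | bot => exact one_ne_zero (hleading (Subalgebra.one_mem _) (by rwa [hp] at hrec))
    | coe p =>
      exact hs.y_ne_zero p (hleading (hs.y_mem_Rsub (predIdx_eq_coe_iff.1 hp).1)
        (by rwa [hp] at hrec))

theorem eq_of_y_eq_smul (hs : IsPrimeSeq K Q η c y) {l l' : Fin N} {t : Kˣ}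
    (hy : y l = (t : K) • y l') : l = l' := by
  rcases lt_trichotomy l l' with hlt | heq | hgt
  · have hy' : y l' = (t : K)⁻¹ • y l := by rw [hy, inv_smul_smul₀ t.ne_zero]
    exact absurd (hy' ▸ Subalgebra.smul_mem _ (hs.y_mem_Rsub hlt) _) (hs.y_notMem_Rsub l')
  · exact heq
  · exact absurd (hy ▸ Subalgebra.smul_mem _ (hs.y_mem_Rsub hgt) _) (hs.y_notMem_Rsub l)

theorem eta_ne_of_deltaZero (hs : IsPrimeSeq K Q η c y) {k : Fin N} (hk : deltaZero K Q k) :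
    ∀ l < k, η l ≠ η k := by
  rw [← predIdx_eq_bot_iff]
  cases hp : predIdx η k with
  | bot => rfl
  | coe p =>
    obtain ⟨hpk, hηp, hlast⟩ := predIdx_eq_coe_iff.1 hp
    obtain ⟨f, hf⟩ := hs.homog p
    have hprime : IsPrimeIn K (Rsub K Q.x ((k : ℕ) + 1)) (y p) :=
      Q.isPrimeIn_Rsub_succ_of_deltaZero hk
        (hs.isPrimeIn_Rsub hpk k.2.le fun l hpl hlk => hηp ▸ hlast l hpl hlk) hf
    obtain ⟨l, -, hl, t, hpl⟩ := (hs.prime_iff k (y p)).1 ⟨hprime, f, hf⟩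
    obtain rfl := hs.eq_of_y_eq_smul hpl
    exact absurd hηp.symm (hl k hpk le_rfl)

end IsPrimeSeq

end PrimeSeq

namespace IsOreExtension

variable {K : Type u} [Field K] {R : Type v} [Ring R] [Algebra K R] {A B : Subalgebra K R} {x : R}
  {σ : R ≃ₐ[K] R}

theorem quadratic_unique (h : IsOreExtension A B x σ) {a b c a' b' c' : R} (ha : a ∈ A)
    (hb : b ∈ A) (hc : c ∈ A) (ha' : a' ∈ A) (hb' : b' ∈ A) (hc' : c' ∈ A)
    (habc : a * x ^ 2 + (b * x + c) = a' * x ^ 2 + (b' * x + c')) :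
    a = a' ∧ b = b' ∧ c = c' := by
  have hlinear {b c : R} (hb : b ∈ A) (hc : c ∈ A) : b * x + c ∈ leftDegreeLT A x 2 := by
    simpa using leftDegreeLT.mul_pow_add_mem (n := 1) hb (leftDegreeLT.mem_one.2 hc)
  obtain ⟨haa', hbc⟩ := h.leading_unique ha ha' (hlinear hb hc) (hlinear hb' hc') habc
  exact ⟨haa', h.linear_unique hb hb' hc hc' hbc⟩

theorem map_eq_smul_of_map_mul_gen_sub (h : IsOreExtension A B x σ) {u d : R} (hu : u ∈ A)
    (hd : d ∈ A) (hu0 : u ≠ 0) {ρ s τ : K} (hσu : σ u = ρ • u) (hσx : σ x = s • x)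
    (hσ : σ (u * x - d) = τ • (u * x - d)) : σ d = (ρ * s) • d := by
  rw [map_sub, map_mul, hσu, hσx, smul_mul_smul_comm, smul_sub, sub_eq_add_neg, sub_eq_add_neg,
    ← smul_mul_assoc, ← smul_mul_assoc] at hσ
  obtain ⟨hlead, hconst⟩ := h.linear_unique (A.smul_mem hu _) (A.smul_mem hu _)
    (A.neg_mem (h.map_mem d hd)) (A.neg_mem (A.smul_mem hd _)) hσ
  rw [smul_left_injective K hu0 hlead]
  exact neg_injective hconst

/-- Coefficients of `x²` and of `x` are compared in `x (u x - d) = κ (u x - d) x`. -/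
theorem commutator_eq_smul (h : IsOreExtension A B x σ) {u d : R} (hu : u ∈ A) (hd : d ∈ A)
    (hu0 : u ≠ 0) {ρ s κ : K} (hσu : σ u = ρ • u) (hσd : σ d = (ρ * s) • d)
    (hcomm : x * (u * x - d) = κ • ((u * x - d) * x)) :
    x * u - ρ • (u * x) = (ρ * (s - 1)) • d := by
  have hδu := h.commutator_mem u hu
  have hδd := h.commutator_mem d hd
  have hexpand : (ρ • u) * x ^ 2 + ((x * u - σ u * x - σ d) * x + -(x * d - σ d * x)) =
      (κ • u) * x ^ 2 + (-(κ • d) * x + 0) := by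
    trans x * (u * x - d)
    · rw [← hσu]
      noncomm_ring
    · rw [hcomm, smul_mul_assoc, neg_mul, smul_mul_assoc, add_zero, ← sub_eq_add_neg, ← smul_sub,
        sub_mul, mul_assoc, ← pow_two]
  obtain ⟨hquad, hlin, -⟩ := h.quadratic_unique (A.smul_mem hu _)
    (A.sub_mem hδu (h.map_mem d hd)) (A.neg_mem hδd) (A.smul_mem hu _)
    (A.neg_mem (A.smul_mem hd _)) A.zero_mem hexpand
  obtain rfl : ρ = κ := smul_left_injective K hu0 hquad
  rw [hσu, hσd, smul_mul_assoc, sub_eq_iff_eq_add] at hlin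
  rw [hlin, mul_sub_one, sub_smul, neg_add_eq_sub]

end IsOreExtension

section Diagonals

variable {m n : ℕ}

theorem image_snd_sub_fst (hm : 0 < m) (hn : 0 < n) :
    Finset.univ.image (fun z : Fin m × Fin n => (z.2 : ℤ) - z.1) =
      Finset.Icc (1 - m : ℤ) (n - 1) := by
  ext d
  simp only [Finset.mem_image, Finset.mem_univ, true_and, Prod.exists, Finset.mem_Icc]
  constructor
  · rintro ⟨i, j, rfl⟩
    omega
  · rintro ⟨hmd, hdn⟩
    exact ⟨⟨(-d).toNat, by omega⟩, ⟨d.toNat, by omega⟩, by simp only; omega⟩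

theorem card_image_le_of_factorsThrough {α β γ : Type*} [DecidableEq β] [DecidableEq γ]
    [Nonempty γ] {f : α → β} {g : α → γ} (h : g.FactorsThrough f) (s : Finset α) :
    (s.image g).card ≤ (s.image f).card := by
  obtain ⟨e, rfl⟩ := (Function.factorsThrough_iff g).1 h
  rw [← Finset.image_image]
  exact Finset.card_image_le

theorem card_image_eq_of_eq_iff_sub_eq {α : Type*} [DecidableEq α] [Nonempty α] (hm : 0 < m)
    (hn : 0 < n) {f : Fin m × Fin n → α}
    (hf : ∀ i i' j j', f (i, j) = f (i', j') ↔ (j : ℤ) - (i : ℤ) = (j' : ℤ) - (i' : ℤ)) :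
    (Finset.univ.image f).card = m + n - 1 := by
  trans (Finset.univ.image fun z : Fin m × Fin n => (z.2 : ℤ) - z.1).card
  · exact le_antisymm
      (card_image_le_of_factorsThrough (fun _ _ hzw => (hf _ _ _ _).2 hzw) _)
      (card_image_le_of_factorsThrough (fun _ _ hzw => (hf _ _ _ _).1 hzw) _)
  · rw [image_snd_sub_fst hm hn, Int.card_Icc]
    omega

end Diagonals

section SolidMinors

variable {K : Type u} [Field K] {q : Kˣ} {m n : ℕ}

/-- The assertion proved by induction along the lexicographic order: the prime element at `(i, j)`
is the solid minor, and the earlier indices in the level set of `(i, j)` are those on its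
diagonal. -/
structure IsSolidAt (η : Fin (m * n) → ℤ) (y : Fin (m * n) → RqMat K q m n) (i : Fin m)
    (j : Fin n) : Prop where
  y_eq : y (finProdFinEquiv (i, j)) = solidMinor K q m n i j
  eta_eq_iff : ∀ (a : Fin m) (b : Fin n),
    (finProdFinEquiv (a, b) : Fin (m * n)) < finProdFinEquiv (i, j) →
      (η (finProdFinEquiv (a, b)) = η (finProdFinEquiv (i, j)) ↔ (b : ℤ) - a = (j : ℤ) - i)

namespace IsSolidAt

variable {η : Fin (m * n) → ℤ} {y : Fin (m * n) → RqMat K q m n} {i i' : Fin m} {j j' : Fin n}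

theorem eta_ne_of_between (hi : (i : ℕ) = i' + 1) (hj : (j : ℕ) = j' + 1)
    (ih : ∀ a b, (finProdFinEquiv (a, b) : Fin (m * n)) < finProdFinEquiv (i, j) →
      IsSolidAt η y a b) {l : Fin (m * n)} (hl : finProdFinEquiv (i', j') < l)
    (hl' : l < finProdFinEquiv (i, j)) : η l ≠ η (finProdFinEquiv (i', j')) := by
  obtain ⟨⟨a, b⟩, rfl⟩ := finProdFinEquiv.surjective l
  intro hη
  have hdiag := ((ih a b hl').eta_eq_iff i' j' hl).1 hη.symm
  rw [finProdFinEquiv_lt_finProdFinEquiv, Fin.lt_def, Fin.lt_def, Fin.ext_iff] at hl hl'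
  omega

theorem eta_eq_iff_of_succ (hi : (i : ℕ) = i' + 1) (hj : (j : ℕ) = j' + 1)
    (ih : ∀ a b, (finProdFinEquiv (a, b) : Fin (m * n)) < finProdFinEquiv (i, j) →
      IsSolidAt η y a b)
    (hη : η (finProdFinEquiv (i', j')) = η (finProdFinEquiv (i, j))) {a : Fin m} {b : Fin n}
    (hab : (finProdFinEquiv (a, b) : Fin (m * n)) < finProdFinEquiv (i, j)) :
    η (finProdFinEquiv (a, b)) = η (finProdFinEquiv (i, j)) ↔ (b : ℤ) - a = (j : ℤ) - i := by
  have hprev : (finProdFinEquiv (i', j') : Fin (m * n)) < finProdFinEquiv (i, j) :=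
    finProdFinEquiv_lt_finProdFinEquiv.2 (Or.inl (Fin.lt_def.2 (by omega)))
  rw [← hη, show (j : ℤ) - i = j' - i' by omega]
  rcases lt_trichotomy (finProdFinEquiv (a, b) : Fin (m * n)) (finProdFinEquiv (i', j'))
    with hlt | heq | hgt
  · exact (ih i' j' hprev).eta_eq_iff a b hlt
  · obtain ⟨rfl, rfl⟩ := Prod.mk.inj (finProdFinEquiv.injective heq)
    exact iff_of_true rfl rfl
  · refine iff_of_false (eta_ne_of_between hi hj ih hgt hab) fun hdiag => ?_
    rw [finProdFinEquiv_lt_finProdFinEquiv, Fin.lt_def, Fin.lt_def, Fin.ext_iff] at hgt hab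
    omega

end IsSolidAt

namespace IsQuantumMatrices

variable {Q : QNA K (RqMat K q m n) (m * n) (m + n)} {η : Fin (m * n) → ℤ}
  {c y : Fin (m * n) → RqMat K q m n} {i i' : Fin m} {j j' : Fin n}

theorem not_deltaZero_of_succ (hQ : IsQuantumMatrices Q) (hq : (q : K) ^ 2 ≠ 1)
    (hi : (i : ℕ) = i' + 1) (hj : (j : ℕ) = j' + 1)
    (hmem : solidMinor K q m n i' j' ∈ Rsub K Q.x (finProdFinEquiv (i, j) : Fin (m * n))) :
    ¬ deltaZero K Q (finProdFinEquiv (i, j)) := by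
  intro hδ
  have hcomm := sub_eq_zero.1 (hδ _ hmem)
  rw [hQ.x_eq, hQ.act_h_solidMinor (Fin.lt_def.2 (by omega)) (Fin.lt_def.2 (by omega))] at hcomm
  exact tGen_mul_solidMinor_ne_smul hq hi hj 1 (hcomm.trans (one_smul K _).symm)

theorem exists_tGen_mul_eq_smul_of_isPrimeIn (hQ : IsQuantumMatrices Q)
    (hq : ∀ s : ℕ, s ≠ 0 → (q : K) ^ s ≠ 1) {p : RqMat K q m n}
    (hp : IsPrimeIn K (Rsub K Q.x ((finProdFinEquiv (i, j) : Fin (m * n)) + 1)) p)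
    {f : Fin (m + n) → ℤ} (hf : IsEigenWith K Q.act f p) :
    ∃ κ : K, tGen K q m n i j * p = κ • (p * tGen K q m n i j) := by
  obtain ⟨-, hp0, -, hnormal, -⟩ := hp
  obtain ⟨b, -, hb⟩ := hnormal _ (gen_mem_Rsub Q.x (Nat.lt_succ_self _))
  rw [hQ.x_eq] at hb
  exact hQ.exists_tGen_mul_eq_smul hq hp0 hf hb

theorem isSolidAt_of_eq_zero_or (hQ : IsQuantumMatrices Q) (hs : IsPrimeSeq K Q η c y)
    (hij : (i : ℕ) = 0 ∨ (j : ℕ) = 0) : IsSolidAt η y i j := by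
  have hδ := hQ.deltaZero_of_eq_zero_or hij
  refine ⟨by rw [hs.rec_delta_zero _ hδ, hQ.x_eq, solidMinor_of_eq_zero_or hij],
    fun a b hab => iff_of_false (hs.eta_ne_of_deltaZero hδ _ hab) fun hdiag => ?_⟩
  rw [finProdFinEquiv_lt_finProdFinEquiv, Fin.lt_def, Fin.lt_def, Fin.ext_iff] at hab
  omega

/-- Otherwise `y_{i'j'}` would stay prime at step `(i, j)`, hence `q`-commute with `t_{ij}`. -/
theorem eta_eq_of_succ (hQ : IsQuantumMatrices Q) (hq : ∀ s : ℕ, s ≠ 0 → (q : K) ^ s ≠ 1)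
    (hs : IsPrimeSeq K Q η c y) (hi : (i : ℕ) = i' + 1) (hj : (j : ℕ) = j' + 1)
    (ih : ∀ a b, (finProdFinEquiv (a, b) : Fin (m * n)) < finProdFinEquiv (i, j) →
      IsSolidAt η y a b) :
    η (finProdFinEquiv (i', j')) = η (finProdFinEquiv (i, j)) := by
  have hprev : (finProdFinEquiv (i', j') : Fin (m * n)) < finProdFinEquiv (i, j) :=
    finProdFinEquiv_lt_finProdFinEquiv.2 (Or.inl (Fin.lt_def.2 (by omega)))
  by_contra hne
  have hprime := hs.isPrimeIn_Rsub (k := (finProdFinEquiv (i, j) : Fin (m * n)) + 1)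
    (Nat.lt_succ_of_lt hprev) (finProdFinEquiv (i, j)).2 fun l hl hl' => by
      rcases (Fin.le_def.2 (Nat.le_of_lt_succ hl')).lt_or_eq with hlt | rfl
      · exact IsSolidAt.eta_ne_of_between hi hj ih hl hlt
      · exact Ne.symm hne
  obtain ⟨f, hf⟩ := hs.homog (finProdFinEquiv (i', j'))
  obtain ⟨κ, hκ⟩ := hQ.exists_tGen_mul_eq_smul_of_isPrimeIn hq hprime hf
  rw [(ih i' j' hprev).y_eq] at hκ
  exact tGen_mul_solidMinor_ne_smul (hq 2 two_ne_zero) hi hj κ hκ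

theorem y_eq_mul_sub_of_predIdx (hQ : IsQuantumMatrices Q) (hq : (q : K) ^ 2 ≠ 1)
    (hs : IsPrimeSeq K Q η c y) (hi : (i : ℕ) = i' + 1) (hj : (j : ℕ) = j' + 1)
    (hp : predIdx η (finProdFinEquiv (i, j)) = (finProdFinEquiv (i', j') : Fin (m * n)))
    (hy : y (finProdFinEquiv (i', j')) = solidMinor K q m n i' j') :
    c (finProdFinEquiv (i, j)) ∈ Rsub K Q.x (finProdFinEquiv (i, j) : Fin (m * n)) ∧
    y (finProdFinEquiv (i, j)) =
      solidMinor K q m n i' j' * tGen K q m n i j - c (finProdFinEquiv (i, j)) := by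
  have hδ := hQ.not_deltaZero_of_succ hq hi hj
    (hy ▸ hs.y_mem_Rsub (predIdx_eq_coe_iff.1 hp).1)
  refine ⟨hs.c_mem _ hδ, ?_⟩
  rw [hs.rec_delta_ne _ hδ, hp, WithBot.recBotCoe_coe, hy, hQ.x_eq]

theorem y_eq_solidMinor_of_predIdx (hQ : IsQuantumMatrices Q)
    (hq : ∀ s : ℕ, s ≠ 0 → (q : K) ^ s ≠ 1) (hs : IsPrimeSeq K Q η c y)
    (hi : (i : ℕ) = i' + 1) (hj : (j : ℕ) = j' + 1)
    (hp : predIdx η (finProdFinEquiv (i, j)) = (finProdFinEquiv (i', j') : Fin (m * n)))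
    (hy : y (finProdFinEquiv (i', j')) = solidMinor K q m n i' j') :
    y (finProdFinEquiv (i, j)) = solidMinor K q m n i j := by
  have hi' : i' < i := Fin.lt_def.2 (by omega)
  have hj' : j' < j := Fin.lt_def.2 (by omega)
  have hq2 : (q : K) ^ 2 - 1 ≠ 0 := sub_ne_zero.2 (hq 2 two_ne_zero)
  have hqq : (q : K) - (q : K)⁻¹ ≠ 0 := by
    have := q.ne_zero
    field_simp
    simpa using hq2
  have hΔ := hy ▸ hs.y_mem_Rsub (predIdx_eq_coe_iff.1 hp).1
  have hΔ0 := hy ▸ hs.y_ne_zero (finProdFinEquiv (i', j'))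
  obtain ⟨hc, hrec⟩ := hQ.y_eq_mul_sub_of_predIdx (hq 2 two_ne_zero) hs hi hj hp hy
  obtain ⟨f, hf⟩ := hs.homog (finProdFinEquiv (i, j))
  obtain ⟨κ, hκ⟩ := hQ.exists_tGen_mul_eq_smul_of_isPrimeIn hq (hs.isPrimeIn_Rsub_succ _) hf
  have hext := Q.isOreExtension (finProdFinEquiv (i, j))
  rw [hQ.x_eq] at hext
  have hσΔ := (hQ.act_h_solidMinor hi' hj').trans (one_smul K _).symm
  have hσc := hext.map_eq_smul_of_map_mul_gen_sub hΔ hc hΔ0 hσΔ (hQ.act_h_tGen_self hi' hj')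
    (hrec ▸ hf _)
  have hcomm := hext.commutator_eq_smul hΔ hc hΔ0 hσΔ hσc (hrec ▸ hκ)
  rw [one_smul, one_mul] at hcomm
  have hcoeff : (q : K) * ((q : K) - (q : K)⁻¹)⁻¹ * ((q : K)⁻¹ * (q : K)⁻¹ - 1) = -1 := by
    have := q.ne_zero
    field_simp
    ring
  rw [hrec, solidMinor_succ hqq hi hj, hcomm, smul_smul, hcoeff, neg_one_smul, sub_eq_add_neg]

theorem isSolidAt_of_succ (hQ : IsQuantumMatrices Q) (hq : ∀ s : ℕ, s ≠ 0 → (q : K) ^ s ≠ 1)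
    (hs : IsPrimeSeq K Q η c y) (hi : (i : ℕ) = i' + 1) (hj : (j : ℕ) = j' + 1)
    (ih : ∀ a b, (finProdFinEquiv (a, b) : Fin (m * n)) < finProdFinEquiv (i, j) →
      IsSolidAt η y a b) : IsSolidAt η y i j := by
  have hprev : (finProdFinEquiv (i', j') : Fin (m * n)) < finProdFinEquiv (i, j) :=
    finProdFinEquiv_lt_finProdFinEquiv.2 (Or.inl (Fin.lt_def.2 (by omega)))
  have hη := hQ.eta_eq_of_succ hq hs hi hj ih
  have hp : predIdx η (finProdFinEquiv (i, j)) = (finProdFinEquiv (i', j') : Fin (m * n)) :=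
    predIdx_eq_coe_iff.2
      ⟨hprev, hη, fun l hl hl' => hη ▸ IsSolidAt.eta_ne_of_between hi hj ih hl hl'⟩
  exact ⟨hQ.y_eq_solidMinor_of_predIdx hq hs hi hj hp (ih i' j' hprev).y_eq,
    fun _ _ => IsSolidAt.eta_eq_iff_of_succ hi hj ih hη⟩

theorem isSolidAt (hQ : IsQuantumMatrices Q) (hq : ∀ s : ℕ, s ≠ 0 → (q : K) ^ s ≠ 1)
    (hs : IsPrimeSeq K Q η c y) (i : Fin m) (j : Fin n) : IsSolidAt η y i j := by
  induction hk : (finProdFinEquiv (i, j) : Fin (m * n)) using WellFoundedLT.induction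
    generalizing i j with
  | ind k ih =>
    subst hk
    by_cases hij : (i : ℕ) = 0 ∨ (j : ℕ) = 0
    · exact hQ.isSolidAt_of_eq_zero_or hs hij
    · rw [not_or] at hij
      exact hQ.isSolidAt_of_succ hq hs (i' := ⟨i - 1, by omega⟩) (j' := ⟨j - 1, by omega⟩)
        (Nat.succ_pred hij.1).symm (Nat.succ_pred hij.2).symm fun a b hab => ih _ hab a b rfl

theorem eta_eq_iff (hQ : IsQuantumMatrices Q) (hq : ∀ s : ℕ, s ≠ 0 → (q : K) ^ s ≠ 1)
    (hs : IsPrimeSeq K Q η c y) (i i' : Fin m) (j j' : Fin n) :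
    η (finProdFinEquiv (i, j)) = η (finProdFinEquiv (i', j')) ↔
      (j : ℤ) - (i : ℤ) = (j' : ℤ) - (i' : ℤ) := by
  rcases lt_trichotomy (finProdFinEquiv (i, j) : Fin (m * n)) (finProdFinEquiv (i', j'))
    with hlt | heq | hgt
  · exact (hQ.isSolidAt hq hs i' j').eta_eq_iff i j hlt
  · obtain ⟨rfl, rfl⟩ := Prod.mk.inj (finProdFinEquiv.injective heq)
    exact iff_of_true rfl rfl
  · rw [eq_comm, (hQ.isSolidAt hq hs i j).eta_eq_iff i' j' hgt, eq_comm]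

end IsQuantumMatrices

end SolidMinors

/-- **Prime elements of quantum matrices are solid quantum minors.**
For the algebra `R_q[M_{m×n}]` (with `q` not a root of unity) viewed as a quantum
nilpotent algebra of dimension `mn` via `x_{(i-1)n+j} = t_{ij}`, the canonical sequence
of homogeneous prime elements from the prime element theorem consists of the solid
quantum minors `y_{(i-1)n+j} = Δ_{[i−min(i,j)+1,i],[j−min(i,j)+1,j]}`, the function `η`
may be chosen as `η((i-1)n+j) = j − i` (i.e. its level sets are those of `(i,j) ↦ j − i`),
and consequently the rank of `R_q[M_{m×n}]` — the cardinality of the range of `η` —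
equals `m + n − 1`. -/
theorem quantum_matrices_prime_elements
    {K : Type u} [Field K] (q : Kˣ) (hq : ∀ s : ℕ, s ≠ 0 → (q : K) ^ s ≠ 1)
    (m n : ℕ) (hm : 0 < m) (hn : 0 < n)
    (Q : QNA K (RqMat K q m n) (m * n) (m + n))
    (hx : ∀ (i : Fin m) (j : Fin n), Q.x (finProdFinEquiv (i, j)) = tGen K q m n i j)
    (hact : ∀ (ξ : Torus K (m + n)) (i : Fin m) (j : Fin n),
      Q.act ξ (tGen K q m n i j) =
        ((ξ (Fin.castAdd n i) * (ξ (Fin.natAdd m j))⁻¹ : Kˣ) : K) • tGen K q m n i j)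
    (η : Fin (m * n) → ℤ) (c y : Fin (m * n) → RqMat K q m n)
    (hseq : IsPrimeSeq K Q η c y) :
    (∀ (i : Fin m) (j : Fin n), y (finProdFinEquiv (i, j)) = solidMinor K q m n i j) ∧
    (∀ (i i' : Fin m) (j j' : Fin n),
      η (finProdFinEquiv (i, j)) = η (finProdFinEquiv (i', j')) ↔
        ((j : ℤ) - (i : ℤ) = (j' : ℤ) - (i' : ℤ))) ∧
    (Finset.univ.image η).card = m + n - 1 := by
  have hQ : IsQuantumMatrices Q := ⟨hx, hact⟩
  have hη := hQ.eta_eq_iff hq hseq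
  have hrank := card_image_eq_of_eq_iff_sub_eq hm hn (f := η ∘ finProdFinEquiv) hη
  rw [← Finset.image_image, Finset.image_univ_equiv] at hrank
  exact ⟨fun i j => (hQ.isSolidAt hq hseq i j).y_eq, hη, hrank⟩
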